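/- arXiv:1609.03889 — 5 statements merged into one kernel-verified Lean document; each statement's English description precedes it below -/
import Mathlib

section
/- For every integer n ≥ 1 and every p ∈ (1,∞), there exists a single weight w on ℝ^n such that the Hardy–Littlewood maximal operator M is bounded from L^p(w) to L^p(w), while the sparse operator T_S is not bounded from L^p(w) to L^p(w); in fact there exists a nonnegative f ∈ L^p(w) with ‖T_S f‖_{L^p(w)} = ∞. -/
open MeasureTheory Set ENNReal

noncomputable section

/-- The half-open axis-parallel cube with corner `a` and side length `l`. -/
def Cube (n : ℕ) (a : Fin n → ℝ) (l : ℝ) : Set (Fin n → ℝ) :=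
  Set.univ.pi fun i => Set.Ico (a i) (a i + l)

/-- The uncentered Hardy–Littlewood maximal function over axis-parallel cubes:
`Mg(x) = sup_{Q ∋ x} |Q|⁻¹ ∫_Q g`. -/
def MaxFn {n : ℕ} (g : (Fin n → ℝ) → ℝ≥0∞) (x : Fin n → ℝ) : ℝ≥0∞ :=
  ⨆ (a : Fin n → ℝ) (l : ℝ) (_ : 0 < l) (_ : x ∈ Cube n a l),
    (volume (Cube n a l))⁻¹ * ∫⁻ y in Cube n a l, g y

/-- The cube of the sparse family `S` with parameters `k, N`:
`[0, 2^{-N})^n` for `k = 0` and `[2^k, 2^k + 2^{-N})^n` for `k ≥ 1`. -/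
def sCube (n k N : ℕ) : Set (Fin n → ℝ) :=
  Cube n (fun _ => if k = 0 then 0 else (2:ℝ)^k) ((2:ℝ)^(-(N:ℤ)))

/-- The sparse operator `T_S g = Σ_{Q ∈ S} (|Q|⁻¹ ∫_Q g) 1_Q`. -/
def TS {n : ℕ} (g : (Fin n → ℝ) → ℝ≥0∞) (x : Fin n → ℝ) : ℝ≥0∞ :=
  ∑' q : ℕ × ℕ,
    (sCube n q.1 q.2).indicator
      (fun _ => (volume (sCube n q.1 q.2))⁻¹ * ∫⁻ y in sCube n q.1 q.2, g y) x

/-- The `j`-th digit (for `j ≥ 1`) of `t ∈ [0,1)` in base `2^k`, using the expansion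
which is not eventually constant `2^k - 1`. -/
def digit (k j : ℕ) (t : ℝ) : ℤ := ⌊t * 2^(k*j)⌋ % 2^k

/-- `Ω_m(k) ⊆ [0,1)^n`: the points all of whose coordinates have base-`2^k` digits
in `{0, …, 2^{k-1}-1}` for `1 ≤ j ≤ m-1`, with `m`-th digit equal to `2^{k-1}`. -/
def Omega (n k m : ℕ) : Set (Fin n → ℝ) :=
  {x | (∀ i, x i ∈ Set.Ico (0:ℝ) 1) ∧
    ∀ i, (∀ j, 1 ≤ j → j < m → digit k j (x i) < 2^(k-1)) ∧
      digit k m (x i) = 2^(k-1)}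

/-- The weight `w_k = Σ_{m ≥ 1} (2^{kn}/(2^{(k-1)n}+1))^m 1_{Ω_m(k)}`. -/
def wk (n k : ℕ) : (Fin n → ℝ) → ℝ≥0∞ := fun x =>
  ∑' m : ℕ,
    (Omega n k (m+1)).indicator
      (fun _ => ((2:ℝ≥0∞)^(k*n) / ((2:ℝ≥0∞)^((k-1)*n) + 1))^(m+1)) x

/-- `Q_1^m(k) = [2^{-k(m-1)-1}, 2^{-k(m-1)-1} + 2^{-km})^n`. -/
def Q1 (n k m : ℕ) : Set (Fin n → ℝ) :=
  Cube n (fun _ => (2:ℝ)^(-(k*(m-1) : ℤ) - 1)) ((2:ℝ)^(-(k*m : ℤ)))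

/-- `Γ(k) = ⋃_{m ≥ 3} Q_1^m(k)`. -/
def Gamma (n k : ℕ) : Set (Fin n → ℝ) := ⋃ m : ℕ, Q1 n k (m+3)

/-- `A_k = 2^{(k-1)n} (2^{(k-1)n}+1)^2`. -/
def Ak (n k : ℕ) : ℝ≥0∞ := 2^((k-1)*n) * (2^((k-1)*n) + 1)^2

/-- The weight `w(x) = Σ_{k ≥ 3} A_k w_k(x - 2⃗^k) 1_{Γ(k)}(x - 2⃗^k)`. -/
def bigW (n : ℕ) : (Fin n → ℝ) → ℝ≥0∞ := fun x =>
  ∑' k : ℕ,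
    (Gamma n (k+3)).indicator (fun z => Ak n (k+3) * wk n (k+3) z)
      (fun i => x i - (2:ℝ)^(k+3))

/-- The test function `f(x) = Σ_{k ≥ 3} k^{-ε} A_k w_k(x - 2⃗^k)`. -/
def bigF (n : ℕ) (ε : ℝ) : (Fin n → ℝ) → ℝ≥0∞ := fun x =>
  ∑' k : ℕ,
    ((k+3 : ℝ≥0∞) ^ (-ε)) * Ak n (k+3) * wk n (k+3) (fun i => x i - (2:ℝ)^(k+3))

/-- `T` is bounded from `L^p(v)` to `L^p(u)` (for nonnegative functions, which are
required to be supported in `supp v`): there is a finite constant `C` with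
`‖Tf‖_{L^p(u)} ≤ C ‖f‖_{L^p(v)}` for all `f ∈ L^p(v)`. -/
def BddOn {n : ℕ} (T : ((Fin n → ℝ) → ℝ≥0∞) → (Fin n → ℝ) → ℝ≥0∞)
    (p : ℝ) (v u : (Fin n → ℝ) → ℝ≥0∞) : Prop :=
  ∃ C : ℝ≥0∞, C ≠ ∞ ∧ ∀ f : (Fin n → ℝ) → ℝ≥0∞, Measurable f →
    (∀ x, v x = 0 → f x = 0) → (∫⁻ x, f x ^ p * v x) < ∞ →
    ∫⁻ x, T f x ^ p * u x ≤ C ^ p * ∫⁻ x, f x ^ p * v x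

/-- The dual weight `u^{1-p'} 1_{supp u}`. -/
def dualW {n : ℕ} (u : (Fin n → ℝ) → ℝ≥0∞) (q : ℝ) : (Fin n → ℝ) → ℝ≥0∞ :=
  fun x => if u x = 0 then 0 else u x ^ (1 - q)

/-- Jensen/Hölder. -/
lemma jensen_lint {α : Type*} [MeasurableSpace α] (μ : Measure α) {p : ℝ} (hp : 1 < p)
    {f : α → ℝ≥0∞} (hf : AEMeasurable f μ) :
    (∫⁻ x, f x ∂μ) ^ p ≤ μ univ ^ (p - 1) * ∫⁻ x, f x ^ p ∂μ := by
  have hpq := Real.HolderConjugate.conjExponent hp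
  have h := ENNReal.lintegral_mul_le_Lp_mul_Lq μ hpq hf (g := fun _ => 1) aemeasurable_const
  simp only [Pi.mul_apply, mul_one, ENNReal.one_rpow, lintegral_const, one_mul] at h
  have hp0 : 0 < p := by linarith
  calc (∫⁻ x, f x ∂μ) ^ p ≤ _ := ENNReal.rpow_le_rpow h hp0.le
    _ = _ := by
      rw [ENNReal.mul_rpow_of_nonneg _ _ hp0.le, ← ENNReal.rpow_mul, ← ENNReal.rpow_mul, mul_comm]
      congr 2
      · rw [Real.conjExponent]; field_simp
      · rw [one_div_mul_cancel hp0.ne', ENNReal.rpow_one]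

lemma jensen_tsum {p : ℝ} (hp : 1 < p) (c g : ℕ → ℝ≥0∞) :
    (∑' k, c k * g k) ^ p ≤ (∑' k, c k) ^ (p - 1) * ∑' k, c k * g k ^ p := by
  have h := jensen_lint ((Measure.count : Measure ℕ).withDensity c) hp
    (f := g) (measurable_from_nat.aemeasurable)
  rw [lintegral_withDensity_eq_lintegral_mul _ measurable_from_nat measurable_from_nat,
    lintegral_withDensity_eq_lintegral_mul _ measurable_from_nat measurable_from_nat,
    withDensity_apply _ MeasurableSet.univ] at h
  simpa [lintegral_count] using h

/-- Auxiliary maximal function. -/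
def NFn {n : ℕ} (g : (Fin n → ℝ) → ℝ≥0∞) (x : Fin n → ℝ) : ℝ≥0∞ :=
  ⨆ (c : Fin n → ℝ) (r : ℝ) (_ : 0 < r) (_ : x ∈ Metric.ball c r),
    (volume (Metric.closedBall c r))⁻¹ * ∫⁻ y in Metric.closedBall c r, g y

lemma lt_NFn {n : ℕ} (g : (Fin n → ℝ) → ℝ≥0∞) (x : Fin n → ℝ) (t : ℝ≥0∞) :
    t < NFn g x ↔ ∃ (c : Fin n → ℝ) (r : ℝ), 0 < r ∧ x ∈ Metric.ball c r ∧
      t < (volume (Metric.closedBall c r))⁻¹ * ∫⁻ y in Metric.closedBall c r, g y := by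
  simp only [NFn, lt_iSup_iff, exists_prop]

lemma measurable_NFn {n : ℕ} (g : (Fin n → ℝ) → ℝ≥0∞) : Measurable (NFn g) := by
  apply measurable_of_Ioi
  intro t
  apply IsOpen.measurableSet
  rw [isOpen_iff_mem_nhds]
  intro x hx
  obtain ⟨c, r, hr, hxc, ht⟩ := (lt_NFn g x t).1 hx
  filter_upwards [Metric.isOpen_ball.mem_nhds hxc] with y hy
  exact (lt_NFn g y t).2 ⟨c, r, hr, hy, ht⟩

lemma volume_cb {n : ℕ} (c : Fin n → ℝ) {r : ℝ} (hr : 0 ≤ r) :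
    volume (Metric.closedBall c r) = ENNReal.ofReal (2 * r) ^ n := by
  rw [Real.volume_pi_closedBall c hr, ENNReal.ofReal_pow (by positivity), Fintype.card_fin]

lemma lt_avg {V t I : ℝ≥0∞} (h : t < V⁻¹ * I) (hV : V ≠ 0) (hV' : V ≠ ∞) : t * V ≤ I := by
  calc t * V ≤ V⁻¹ * I * V := by gcongr
    _ = I * (V⁻¹ * V) := by ring
    _ = I := by rw [ENNReal.inv_mul_cancel hV hV', mul_one]

lemma weak_NFn {n : ℕ} (hn : 1 ≤ n) (g : (Fin n → ℝ) → ℝ≥0∞) 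
    {t : ℝ≥0∞} (ht : t ≠ 0) (ht' : t ≠ ∞) :
    volume {x | t < NFn g x} ≤ 5 ^ n * t⁻¹ * ∫⁻ x, g x := by
  by_cases hI : ∫⁻ x, g x = ∞
  · rw [hI, ENNReal.mul_top]
    · exact le_top
    · exact mul_ne_zero (by positivity) (ENNReal.inv_ne_zero.2 ht')
  have hV0 : ∀ (c : Fin n → ℝ) {r : ℝ}, 0 < r → volume (Metric.closedBall c r) ≠ 0 := by
    intro c r hr
    rw [volume_cb c hr.le]
    apply pow_ne_zero
    simp [hr]
  have hVt : ∀ (c : Fin n → ℝ) {r : ℝ}, 0 < r → volume (Metric.closedBall c r) ≠ ∞ := by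
    intro c r hr
    rw [volume_cb c hr.le]
    finiteness
  set A : Set ((Fin n → ℝ) × ℝ) := {q | 0 < q.2 ∧
      t < (volume (Metric.closedBall q.1 q.2))⁻¹ * ∫⁻ y in Metric.closedBall q.1 q.2, g y} with hA
  have hAle : ∀ q ∈ A, t * volume (Metric.closedBall q.1 q.2) ≤
      ∫⁻ y in Metric.closedBall q.1 q.2, g y :=
    fun q hq => lt_avg hq.2 (hV0 _ hq.1) (hVt _ hq.1)
  have hR : ∀ q ∈ A, q.2 ≤ max 1 ((t⁻¹ * ∫⁻ x, g x).toReal) := by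
    intro q hq
    by_contra hcon
    push Not at hcon
    obtain ⟨h1, h2⟩ := max_lt_iff.1 hcon
    have h3 : volume (Metric.closedBall q.1 q.2) ≤ t⁻¹ * ∫⁻ x, g x := by
      calc volume (Metric.closedBall q.1 q.2) = t⁻¹ * (t * volume (Metric.closedBall q.1 q.2)) := by
            rw [← mul_assoc, ENNReal.inv_mul_cancel ht ht', one_mul]
        _ ≤ t⁻¹ * ∫⁻ y in Metric.closedBall q.1 q.2, g y := by gcongr; exact hAle q hq
        _ ≤ _ := by gcongr; exact Measure.restrict_le_self
    have h4 : ENNReal.ofReal q.2 ≤ volume (Metric.closedBall q.1 q.2) := by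
      rw [volume_cb _ hq.1.le]
      calc ENNReal.ofReal q.2 ≤ ENNReal.ofReal (2 * q.2) := ENNReal.ofReal_le_ofReal (by linarith [hq.1])
        _ ≤ _ := le_self_pow₀ (by rw [ENNReal.one_le_ofReal]; linarith) (by omega)
    have h5 := (ENNReal.ofReal_le_iff_le_toReal (by finiteness)).1 (h4.trans h3)
    linarith
  obtain ⟨u, huA, hdisj, hcov⟩ := Vitali.exists_disjoint_subfamily_covering_enlargement_closedBall
    A Prod.fst Prod.snd _ hR 5 (by norm_num)
  have hcount : u.Countable := hdisj.countable_of_nonempty_interior (by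
    intro q hq
    refine ⟨q.1, Metric.ball_subset_interior_closedBall ?_⟩
    exact Metric.mem_ball_self (huA hq).1)
  calc volume {x | t < NFn g x} ≤ volume (⋃ q ∈ u, Metric.closedBall q.1 (5 * q.2)) := by
        apply measure_mono
        intro x hx
        obtain ⟨c, r, hr, hxc, htt⟩ := (lt_NFn g x t).1 hx
        obtain ⟨b, hb, hsub⟩ := hcov (c, r) ⟨hr, htt⟩
        exact mem_biUnion hb (hsub (Metric.ball_subset_closedBall hxc))
    _ ≤ ∑' q : u, volume (Metric.closedBall q.1.1 (5 * q.1.2)) := measure_biUnion_le _ hcount _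
    _ ≤ ∑' q : u, 5 ^ n * t⁻¹ * ∫⁻ y in Metric.closedBall q.1.1 q.1.2, g y := by
        apply ENNReal.tsum_le_tsum
        intro q
        have hq := huA q.2
        have : volume (Metric.closedBall q.1.1 (5 * q.1.2)) =
            5 ^ n * volume (Metric.closedBall q.1.1 q.1.2) := by
          rw [volume_cb _ hq.1.le, volume_cb _ (by linarith [hq.1]), ← mul_pow,
            show 2 * (5 * q.1.2) = 5 * (2 * q.1.2) by ring, ENNReal.ofReal_mul (by norm_num)]
          norm_num
        rw [this, mul_assoc]
        gcongr
        calc volume (Metric.closedBall q.1.1 q.1.2)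
            = t⁻¹ * (t * volume (Metric.closedBall q.1.1 q.1.2)) := by
              rw [← mul_assoc, ENNReal.inv_mul_cancel ht ht', one_mul]
          _ ≤ _ := by gcongr; exact hAle q hq
    _ = 5 ^ n * t⁻¹ * ∫⁻ y in ⋃ q ∈ u, Metric.closedBall q.1 q.2, g y := by
        rw [ENNReal.tsum_mul_left, lintegral_biUnion hcount _ hdisj]
        intro i _
        exact Metric.isClosed_closedBall.measurableSet
    _ ≤ _ := by gcongr; exact Measure.restrict_le_self

lemma NFn_le {n : ℕ} (f h : (Fin n → ℝ) → ℝ≥0∞) (s : ℝ≥0∞) (hfh : ∀ x, f x ≤ h x + s)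
    (x : Fin n → ℝ) : NFn f x ≤ NFn h x + s := by
  apply iSup_le; intro c; apply iSup_le; intro r; apply iSup_le; intro hr; apply iSup_le; intro hx
  calc (volume (Metric.closedBall c r))⁻¹ * ∫⁻ y in Metric.closedBall c r, f y
      ≤ (volume (Metric.closedBall c r))⁻¹ * ∫⁻ y in Metric.closedBall c r, (h y + s) := by
        gcongr with y; exact hfh y
    _ = (volume (Metric.closedBall c r))⁻¹ * (∫⁻ y in Metric.closedBall c r, h y)
        + (volume (Metric.closedBall c r))⁻¹ * (s * volume (Metric.closedBall c r)) := by
        rw [lintegral_add_right _ measurable_const, mul_add]; simp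
    _ ≤ _ := by
      gcongr
      · exact le_iSup_of_le c (le_iSup_of_le r (le_iSup_of_le hr (le_iSup_of_le hx le_rfl)))
      · rw [mul_comm, mul_assoc]
        exact mul_le_of_le_one_right' (ENNReal.mul_inv_le_one _)

lemma layer (q : ℝ) (hq : 0 < q) (y : ℝ≥0∞) :
    ∫⁻ t in Ioi (0:ℝ), (if ENNReal.ofReal t < y then ENNReal.ofReal (t ^ (q-1)) else 0)
      = ENNReal.ofReal (1/q) * y ^ q := by
  have key : ∀ Y : ℝ, 0 ≤ Y →
      ∫⁻ t in Ioi (0:ℝ), (if ENNReal.ofReal t < ENNReal.ofReal Y then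
        ENNReal.ofReal (t ^ (q-1)) else 0) = ENNReal.ofReal (1/q) * (ENNReal.ofReal Y) ^ q := by
    intro Y hY
    have h1 : ∀ t ∈ Ioi (0:ℝ), (if ENNReal.ofReal t < ENNReal.ofReal Y then
        ENNReal.ofReal (t ^ (q-1)) else 0) =
        (Iio Y).indicator (fun t => ENNReal.ofReal (t ^ (q-1))) t := by
      intro t ht
      rw [indicator_apply]
      congr 1
      simp only [mem_Iio, eq_iff_iff]
      exact ENNReal.ofReal_lt_ofReal_iff_of_nonneg (le_of_lt ht)
    rw [setLIntegral_congr_fun measurableSet_Ioi h1, lintegral_indicator measurableSet_Iio,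
      Measure.restrict_restrict measurableSet_Iio, Iio_inter_Ioi]
    rw [← setLIntegral_congr (Ioo_ae_eq_Ioc (a := 0) (b := Y) (μ := volume)).symm]
    rw [← ofReal_integral_eq_lintegral_ofReal, ← intervalIntegral.integral_of_le hY,
      integral_rpow (Or.inl (by linarith)), ENNReal.ofReal_rpow_of_nonneg hY hq.le,
      ← ENNReal.ofReal_mul (by positivity)]
    · congr 1
      rw [sub_add_cancel, Real.zero_rpow hq.ne']; ring
    · have := intervalIntegral.intervalIntegrable_rpow' (a := 0) (b := Y) (r := q - 1) (by linarith)
      exact (intervalIntegrable_iff_integrableOn_Ioc_of_le hY).1 this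
    · filter_upwards [ae_restrict_mem measurableSet_Ioc] with t ht
      exact Real.rpow_nonneg ht.1.le _
  by_cases hy : y = ∞
  · subst hy
    rw [ENNReal.top_rpow_of_pos hq, ENNReal.mul_top (by simp [hq])]
    rw [eq_top_iff]
    have h2 : ∀ k : ℕ, (k : ℝ≥0∞) ≤ ∫⁻ t in Ioi (0:ℝ), (if ENNReal.ofReal t < ∞ then
        ENNReal.ofReal (t ^ (q-1)) else 0) := by
      intro k
      have h3 := key ((q * k) ^ (1/q)) (by positivity)
      rw [ENNReal.ofReal_rpow_of_nonneg (by positivity) hq.le, ← ENNReal.ofReal_mul (by positivity),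
        ← Real.rpow_mul (by positivity), one_div_mul_cancel hq.ne', Real.rpow_one,
        ← mul_assoc, one_div_mul_cancel hq.ne', one_mul, ENNReal.ofReal_natCast] at h3
      rw [← h3]
      apply lintegral_mono
      intro t
      dsimp only
      split_ifs with ha hb hb
      · exact le_rfl
      · exact absurd ENNReal.ofReal_lt_top hb
      · exact zero_le
      · exact zero_le
    exact le_of_forall_lt fun c hc => by
      obtain ⟨k, hk⟩ := ENNReal.exists_nat_gt hc.ne
      exact hk.trans_le (h2 k)
  · have := key y.toReal ENNReal.toReal_nonneg
    rwa [ENNReal.ofReal_toReal hy] at this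

lemma strong_NFn {n : ℕ} (hn : 1 ≤ n) {p : ℝ} (hp : 1 < p) :
    ∃ C : ℝ≥0∞, C ≠ ∞ ∧ ∀ f : (Fin n → ℝ) → ℝ≥0∞, Measurable f →
      ∫⁻ x, NFn f x ^ p ≤ C * ∫⁻ x, f x ^ p := by
  have hp0 : 0 < p := by linarith
  refine ⟨ENNReal.ofReal p * (5 ^ n * 2 * (ENNReal.ofReal (1 / (p-1)) * 2 ^ (p-1))), ?_, ?_⟩
  · have : (2:ℝ≥0∞) ^ (p-1) ≠ ∞ := ENNReal.rpow_ne_top_of_nonneg (by linarith) (by norm_num)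
    finiteness
  intro f hf
  have hN := measurable_NFn f
  have e1 : ∀ x, NFn f x ^ p = ENNReal.ofReal p * ∫⁻ t in Ioi (0:ℝ),
      (if ENNReal.ofReal t < NFn f x then ENNReal.ofReal (t ^ (p-1)) else 0) := by
    intro x
    rw [layer p hp0, ← mul_assoc, ← ENNReal.ofReal_mul hp0.le, mul_one_div_cancel hp0.ne']
    simp
  have m1 : Measurable (Function.uncurry fun (x : Fin n → ℝ) (t : ℝ) =>
      (if ENNReal.ofReal t < NFn f x then ENNReal.ofReal (t ^ (p-1)) else 0)) := by
    apply Measurable.ite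
    · exact measurableSet_lt (by fun_prop) (hN.comp measurable_fst)
    · fun_prop
    · fun_prop
  have m2 : Measurable (Function.uncurry fun (x : Fin n → ℝ) (t : ℝ) =>
      f x * (if ENNReal.ofReal t < 2 * f x then ENNReal.ofReal (t ^ (p-1-1)) else 0)) := by
    apply Measurable.mul (hf.comp measurable_fst)
    apply Measurable.ite
    · exact measurableSet_lt (by fun_prop) ((hf.comp measurable_fst).const_mul 2)
    · fun_prop
    · fun_prop
  have main : ∀ t ∈ Ioi (0:ℝ), (∫⁻ x, (if ENNReal.ofReal t < NFn f x then
        ENNReal.ofReal (t ^ (p-1)) else 0)) ≤ 5 ^ n * 2 * ∫⁻ x, 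
        f x * (if ENNReal.ofReal t < 2 * f x then ENNReal.ofReal (t ^ (p-1-1)) else 0) := by
    intro t ht
    have ht : 0 < t := ht
    set s := ENNReal.ofReal (t/2) with hs
    have hs0 : s ≠ 0 := by simp [hs, ht]
    have hst : s ≠ ∞ := by finiteness
    have h2s : ENNReal.ofReal t = s + s := by
      rw [hs, ← ENNReal.ofReal_add (by positivity) (by positivity)]; congr 1; ring
    set h : (Fin n → ℝ) → ℝ≥0∞ := fun x => if ENNReal.ofReal t < 2 * f x then f x else 0 with hh
    have hm : MeasurableSet {x | ENNReal.ofReal t < 2 * f x} :=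
      measurableSet_lt measurable_const (hf.const_mul 2)
    have hhm : Measurable h := Measurable.ite hm hf measurable_const
    have hfh : ∀ x, f x ≤ h x + s := by
      intro x
      simp only [hh]
      split_ifs with h1
      · exact le_self_add
      · rw [zero_add]
        rw [not_lt, h2s, ← two_mul] at h1
        exact (ENNReal.mul_le_mul_iff_right (by norm_num) (by norm_num)).1 h1
    have hsub : {x | ENNReal.ofReal t < NFn f x} ⊆ {x | s < NFn h x} := by
      intro x hx
      have h1 : ENNReal.ofReal t < NFn f x := hx
      have h2 := NFn_le f h s hfh x
      by_contra h3
      replace h3 : NFn h x ≤ s := not_lt.1 h3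
      have : NFn f x ≤ s + s := h2.trans (by gcongr)
      rw [← h2s] at this
      exact absurd h1 (not_lt.2 this)
    have e : ∫⁻ x, (if ENNReal.ofReal t < NFn f x then ENNReal.ofReal (t ^ (p-1)) else 0)
        = ENNReal.ofReal (t^(p-1)) * volume {x | ENNReal.ofReal t < NFn f x} := by
      rw [← lintegral_indicator_const (measurableSet_lt measurable_const hN)]
      congr 1
      funext x
      simp [indicator_apply]
    rw [e]
    calc _ ≤ ENNReal.ofReal (t^(p-1)) * (5 ^ n * s⁻¹ * ∫⁻ x, h x) := by
          gcongr
          exact (measure_mono hsub).trans (weak_NFn hn h hs0 hst)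
      _ = 5 ^ n * 2 * (ENNReal.ofReal (t ^ (p-1-1)) * ∫⁻ x, h x) := by
          have : ENNReal.ofReal (t^(p-1)) * s⁻¹ = 2 * ENNReal.ofReal (t ^ (p-1-1)) := by
            rw [hs, ← ENNReal.ofReal_inv_of_pos (by positivity), ← ENNReal.ofReal_mul (by positivity),
              Real.rpow_sub_one ht.ne' (p-1), ← ENNReal.ofReal_ofNat 2, ← ENNReal.ofReal_mul (by norm_num)]
            congr 1
            field_simp
          calc _ = 5 ^ n * (ENNReal.ofReal (t^(p-1)) * s⁻¹) * ∫⁻ x, h x := by ring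
            _ = _ := by rw [this]; ring
      _ = _ := by
          rw [← lintegral_const_mul _ hhm]
          congr 2
          funext x
          simp only [hh]
          split_ifs <;> ring
  simp_rw [e1]
  rw [lintegral_const_mul' _ _ (by finiteness), mul_assoc]
  gcongr
  rw [lintegral_lintegral_swap m1.aemeasurable]
  calc _ ≤ ∫⁻ t in Ioi (0:ℝ), 5 ^ n * 2 * ∫⁻ x, 
        f x * (if ENNReal.ofReal t < 2 * f x then ENNReal.ofReal (t ^ (p-1-1)) else 0) :=
        setLIntegral_mono' measurableSet_Ioi main
    _ = 5 ^ n * 2 * ∫⁻ x, ∫⁻ t in Ioi (0:ℝ), 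
        f x * (if ENNReal.ofReal t < 2 * f x then ENNReal.ofReal (t ^ (p-1-1)) else 0) := by
        rw [lintegral_const_mul' _ _ (by finiteness), lintegral_lintegral_swap m2.aemeasurable]
    _ = 5 ^ n * 2 * ∫⁻ x, (ENNReal.ofReal (1 / (p-1)) * 2 ^ (p-1)) * f x ^ p := by
        congr 2
        funext x
        rw [lintegral_const_mul, layer (p-1) (by linarith), ENNReal.mul_rpow_of_nonneg _ _ (by linarith)]
        · have : f x ^ p = f x * f x ^ (p-1) := by
            conv_lhs => rw [show p = 1 + (p-1) by ring]
            rw [ENNReal.rpow_add_of_nonneg _ _ (by norm_num) (by linarith), ENNReal.rpow_one]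
          rw [this]; ring
        · apply Measurable.ite
          · exact measurableSet_lt (by fun_prop) measurable_const
          · fun_prop
          · fun_prop
    _ = _ := by
        rw [lintegral_const_mul _ (by fun_prop)]; ring

lemma volume_Cube (n : ℕ) (a : Fin n → ℝ) (l : ℝ) :
    volume (Cube n a l) = ENNReal.ofReal l ^ n := by
  rw [Cube, Real.volume_pi_Ico]; simp

lemma measurableSet_Cube (n : ℕ) (a : Fin n → ℝ) (l : ℝ) : MeasurableSet (Cube n a l) :=
  MeasurableSet.univ_pi fun _ => measurableSet_Ico

lemma Max_le_N {n : ℕ} (a : Fin n → ℝ) {l : ℝ} (hl : 0 < l) (g : (Fin n → ℝ) → ℝ≥0∞)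
    {x : Fin n → ℝ} (hx : x ∈ Cube n a l) :
    (volume (Cube n a l))⁻¹ * ∫⁻ y in Cube n a l, g y ≤ 2 ^ n * NFn g x := by
  have hball : Cube n a l ⊆ Metric.ball (fun i => a i + l/2) l := by
    intro y hy
    rw [Metric.mem_ball, dist_pi_lt_iff hl]
    intro i
    have := hy i (mem_univ i)
    rw [Real.dist_eq, abs_lt]
    constructor <;> linarith [this.1, this.2]
  have hv : (volume (Cube n a l))⁻¹ = 2 ^ n * (volume (Metric.closedBall (fun i => a i + l/2) l))⁻¹ := by
    rw [volume_Cube, volume_cb _ hl.le, ENNReal.ofReal_mul (by norm_num), mul_pow,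
      ENNReal.mul_inv (by simp) (by simp), ← mul_assoc, ENNReal.ofReal_ofNat,
      ENNReal.mul_inv_cancel (by simp) (by finiteness), one_mul]
  rw [hv, mul_assoc]
  gcongr
  calc _ ≤ (volume (Metric.closedBall (fun i => a i + l/2) l))⁻¹ *
      ∫⁻ y in Metric.closedBall (fun i => a i + l/2) l, g y := by
        gcongr; exact hball.trans Metric.ball_subset_closedBall
    _ ≤ NFn g x := le_iSup_of_le (fun i => a i + l/2) (le_iSup_of_le l (le_iSup_of_le hl (le_iSup_of_le (hball hx) le_rfl)))

def UU (i : ℕ) : ℝ≥0∞ := ENNReal.ofReal (1 / ((i:ℝ) + 1))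
def WW (i : ℕ) : ℝ≥0∞ := ENNReal.ofReal (1 / (((i:ℝ) + 1) * ((i:ℝ) + 2)))
def bb (n : ℕ) (p : ℝ) (i : ℕ) : ℝ := 1/2 * ((i:ℝ)+2)^(-(1/(p*n)))
def dd (n : ℕ) (p : ℝ) (i : ℕ) : ℝ≥0∞ := ENNReal.ofReal (bb n p i) ^ n
def KK (n : ℕ) (p : ℝ) : ℝ := ((1/2:ℝ)^n)^p
def vv (n : ℕ) (p : ℝ) (i : ℕ) : ℝ≥0∞ := dd n p i * (((4:ℝ≥0∞)^n)^i)⁻¹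

lemma WW_add (i : ℕ) : WW i + UU (i+1) = UU i := by
  rw [WW, UU, UU, ← ENNReal.ofReal_add (by positivity) (by positivity)]
  congr 1
  push_cast
  field_simp
  ring

lemma sum_WW_le (m : ℕ) : ∑' j, (if m ≤ j then WW j else 0) ≤ UU m := by
  apply ENNReal.tsum_le_of_sum_range_le
  intro N
  have : ∑ j ∈ Finset.range N, (if m ≤ j then WW j else 0) + UU (max m N) ≤ UU m := by
    induction N with
    | zero => simp
    | succ N ih =>
      rw [Finset.sum_range_succ]
      by_cases h : m ≤ N
      · rw [if_pos h, max_eq_right (by omega), add_assoc, WW_add]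
        rwa [max_eq_right h] at ih
      · rw [if_neg h, add_zero, max_eq_left (by omega)]
        rwa [max_eq_left (by omega)] at ih
  exact le_self_add.trans this

lemma bb_pos (n : ℕ) (p : ℝ) (i : ℕ) : 0 < bb n p i := by unfold bb; positivity

lemma bb_le {p : ℝ} (hp : 1 < p) (n i : ℕ) : bb n p i ≤ 1/2 := by
  unfold bb
  have : ((i:ℝ)+2)^(-(1/(p*n))) ≤ 1 := by
    apply Real.rpow_le_one_of_one_le_of_nonpos
    · have : (0:ℝ) ≤ i := by positivity
      linarith
    · rw [neg_nonpos]; positivity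
  linarith

lemma dd_ne_zero (n : ℕ) (p : ℝ) (i : ℕ) : dd n p i ≠ 0 := by
  unfold dd
  apply pow_ne_zero
  simp [bb_pos n p i]

lemma dd_ne_top (n : ℕ) (p : ℝ) (i : ℕ) : dd n p i ≠ ∞ := by
  unfold dd; finiteness

lemma vv_ne_zero (n : ℕ) (p : ℝ) (i : ℕ) : vv n p i ≠ 0 := by
  unfold vv
  exact mul_ne_zero (dd_ne_zero _ _ _) (ENNReal.inv_ne_zero.2 (by finiteness))

lemma vv_ne_top (n : ℕ) (p : ℝ) (i : ℕ) : vv n p i ≠ ∞ := by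
  unfold vv
  exact ENNReal.mul_ne_top (dd_ne_top _ _ _) (ENNReal.inv_ne_top.2 (by positivity))

lemma R_vv (n : ℕ) (p : ℝ) (i : ℕ) : ((4:ℝ≥0∞)^n)^i * vv n p i = dd n p i := by
  unfold vv
  rw [mul_left_comm, ENNReal.mul_inv_cancel (by positivity) (by finiteness), mul_one]

lemma KK_pos (n : ℕ) (p : ℝ) : 0 < KK n p := by unfold KK; positivity

lemma KK_le {p : ℝ} (hp : 1 < p) (n : ℕ) : KK n p ≤ 1 := by
  unfold KK
  apply Real.rpow_le_one (by positivity) _ (by linarith)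
  exact pow_le_one₀ (by norm_num) (by norm_num)

lemma dd_rpow {n : ℕ} (hn : 1 ≤ n) {p : ℝ} (hp : 1 < p) (i : ℕ) :
    dd n p i ^ p = ENNReal.ofReal (KK n p * (1 / ((i:ℝ)+2))) := by
  have hn' : (0:ℝ) < n := by exact_mod_cast hn
  have hb := bb_pos n p i
  rw [dd, ← ENNReal.ofReal_pow hb.le, ENNReal.ofReal_rpow_of_nonneg (by positivity) (by linarith)]
  congr 1
  rw [bb, mul_pow, Real.mul_rpow (by positivity) (by positivity), KK]
  congr 1
  rw [← Real.rpow_natCast, ← Real.rpow_mul (by positivity), ← Real.rpow_mul (by positivity),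
    show -(1/(p*n)) * (n * p) = -1 by field_simp, Real.rpow_neg_one, one_div]

lemma UU_dd {n : ℕ} (hn : 1 ≤ n) {p : ℝ} (hp : 1 < p) (i : ℕ) :
    UU i * dd n p i ^ p = ENNReal.ofReal (KK n p) * WW i := by
  have := KK_pos n p
  rw [dd_rpow hn hp, UU, WW, ← ENNReal.ofReal_mul (by positivity), ← ENNReal.ofReal_mul (by positivity)]
  congr 1
  field_simp

lemma geom2 : ∑' k : ℕ, ((2:ℝ≥0∞)^k)⁻¹ = 2 := by
  simp_rw [ENNReal.inv_pow]
  rw [ENNReal.tsum_geometric, ENNReal.one_sub_inv_two, inv_inv]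

lemma UU_R {n : ℕ} (hn : 1 ≤ n) (m k : ℕ) :
    UU m * (((4:ℝ≥0∞)^n)^k)⁻¹ ≤ ((2:ℝ≥0∞)^k)⁻¹ * UU (m+k) := by
  have h4 : (((4:ℝ≥0∞)^n)^k)⁻¹ ≤ ((4:ℝ≥0∞)^k)⁻¹ := by
    apply ENNReal.inv_le_inv.2
    gcongr
    exact le_self_pow₀ (by norm_num) (by omega)
  refine (mul_le_mul_right h4 _).trans ?_
  have e4 : ((4:ℝ≥0∞)^k)⁻¹ = ENNReal.ofReal ((1/4)^k) := by
    rw [ENNReal.ofReal_pow (by norm_num), ENNReal.inv_pow, one_div, ENNReal.ofReal_inv_of_pos (by norm_num)]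
    norm_num
  have e2 : ((2:ℝ≥0∞)^k)⁻¹ = ENNReal.ofReal ((1/2)^k) := by
    rw [ENNReal.ofReal_pow (by norm_num), ENNReal.inv_pow, one_div, ENNReal.ofReal_inv_of_pos (by norm_num)]
    norm_num
  rw [e4, e2, UU, UU, ← ENNReal.ofReal_mul (by positivity), ← ENNReal.ofReal_mul (by positivity)]
  apply ENNReal.ofReal_le_ofReal
  have hk : (k:ℝ) + 1 ≤ 2^k := by exact_mod_cast Nat.lt_two_pow_self
  have e : (1/4:ℝ)^k = (1/2)^k * (1/2)^k := by rw [← mul_pow]; norm_num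
  rw [e, mul_left_comm]
  apply mul_le_mul_of_nonneg_left _ (by positivity)
  rw [one_div_pow, one_div_mul_one_div]
  apply one_div_le_one_div_of_le (by positivity)
  push_cast
  have hm : (0:ℝ) ≤ m := by positivity
  have hk0 : (0:ℝ) ≤ k := by positivity
  nlinarith [mul_nonneg hm hk0]

lemma seq_bound {n : ℕ} (hn : 1 ≤ n) {p : ℝ} (hp : 1 < p) (G I : ℕ → ℝ≥0∞)
    (hG : ∀ i, G i ^ p ≤ vv n p i ^ (p-1) * I i) :
    ∑' j, WW j * ∑ m ∈ Finset.range (j+1), (((4:ℝ≥0∞)^n)^m * ∑' k, G (m+k)) ^ p ≤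
      2 ^ p * ∑' i, WW i / vv n p i * I i := by
  have hp0 : 0 < p := by linarith
  set R : ℝ≥0∞ := (4:ℝ≥0∞)^n with hR
  have hR0 : R ≠ 0 := by positivity
  have hRt : R ≠ ∞ := by finiteness
  set g : ℕ → ℝ≥0∞ := fun i => R^i * G i with hg
  have hH : ∀ m, (R^m * ∑' k, G (m+k)) ^ p ≤ 2^(p-1) * ∑' k, (R^k)⁻¹ * g (m+k) ^ p := by
    intro m
    have e : R^m * ∑' k, G (m+k) = ∑' k, (R^k)⁻¹ * g (m+k) := by
      rw [← ENNReal.tsum_mul_left]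
      congr 1
      funext k
      simp only [hg]
      rw [pow_add, mul_comm (R^m) (R^k), mul_assoc, ← mul_assoc (R^k)⁻¹,
        ENNReal.inv_mul_cancel (pow_ne_zero _ hR0) (by finiteness), one_mul]
    rw [e]
    refine (jensen_tsum hp _ _).trans ?_
    gcongr
    rw [← geom2]
    apply ENNReal.tsum_le_tsum
    intro k
    apply ENNReal.inv_le_inv.2
    gcongr
    calc (2:ℝ≥0∞) ≤ 4 := by norm_num
      _ ≤ R := le_self_pow₀ (by norm_num) (by omega)
  have hgI : ∀ i, UU i * g i ^ p ≤ WW i / vv n p i * I i := by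
    intro i
    have hv0 := vv_ne_zero n p i
    have hvt := vv_ne_top n p i
    calc UU i * g i ^ p ≤ UU i * ((R^i)^p * (vv n p i ^ (p-1) * I i)) := by
          simp only [hg]
          rw [ENNReal.mul_rpow_of_nonneg _ _ hp0.le]
          gcongr
          exact hG i
      _ = UU i * ((R^i)^p * vv n p i ^ p) * (vv n p i)⁻¹ * I i := by
          rw [ENNReal.rpow_sub _ _ hv0 hvt, ENNReal.rpow_one, div_eq_mul_inv]; ring
      _ = UU i * dd n p i ^ p * (vv n p i)⁻¹ * I i := by
          rw [← ENNReal.mul_rpow_of_nonneg _ _ hp0.le, hR, R_vv]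
      _ ≤ WW i * (vv n p i)⁻¹ * I i := by
          rw [UU_dd hn hp]
          gcongr
          calc _ ≤ 1 * WW i := by gcongr; exact ENNReal.ofReal_le_one.2 (KK_le hp n)
            _ = _ := one_mul _
      _ = _ := by rw [div_eq_mul_inv]
  set h : ℕ → ℝ≥0∞ := fun m => (R^m * ∑' k, G (m+k)) ^ p with hh
  calc ∑' j, WW j * ∑ m ∈ Finset.range (j+1), h m
      = ∑' j, ∑' m, (if m ≤ j then WW j else 0) * h m := by
        congr 1
        funext j
        rw [Finset.mul_sum, tsum_eq_sum (s := Finset.range (j+1))]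
        · apply Finset.sum_congr rfl
          intro m hm
          rw [Finset.mem_range] at hm
          rw [if_pos (by omega)]
        · intro m hm
          rw [Finset.mem_range] at hm
          rw [if_neg (by omega), zero_mul]
    _ = ∑' m, (∑' j, (if m ≤ j then WW j else 0)) * h m := by
        rw [ENNReal.tsum_comm]
        congr 1
        funext m
        rw [ENNReal.tsum_mul_right]
    _ ≤ ∑' m, UU m * (2^(p-1) * ∑' k, (R^k)⁻¹ * g (m+k) ^ p) := by
        apply ENNReal.tsum_le_tsum
        intro m
        gcongr
        · exact sum_WW_le m
        · exact hH m
    _ = 2^(p-1) * ∑' m, ∑' k, UU m * (R^k)⁻¹ * g (m+k) ^ p := by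
        rw [← ENNReal.tsum_mul_left]
        congr 1
        funext m
        rw [mul_left_comm, ← ENNReal.tsum_mul_left]
        simp_rw [mul_assoc]
    _ ≤ 2^(p-1) * ∑' m, ∑' k, ((2:ℝ≥0∞)^k)⁻¹ * (UU (m+k) * g (m+k) ^ p) := by
        refine mul_le_mul_right (ENNReal.tsum_le_tsum fun m => ENNReal.tsum_le_tsum fun k => ?_) _
        rw [← mul_assoc]
        exact mul_le_mul_left (UU_R hn m k) _
    _ = 2^(p-1) * ∑' k, ((2:ℝ≥0∞)^k)⁻¹ * ∑' m, (UU (m+k) * g (m+k) ^ p) := by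
        rw [ENNReal.tsum_comm]
        simp_rw [ENNReal.tsum_mul_left]
    _ ≤ 2^(p-1) * ∑' k, ((2:ℝ≥0∞)^k)⁻¹ * ∑' i, WW i / vv n p i * I i := by
        refine mul_le_mul_right (ENNReal.tsum_le_tsum fun k => mul_le_mul_right ?_ _) _
        calc ∑' m, (UU (m+k) * g (m+k) ^ p) ≤ ∑' i, UU i * g i ^ p :=
              ENNReal.tsum_comp_le_tsum_of_injective (add_left_injective k) (fun i => UU i * g i ^ p)
          _ ≤ _ := ENNReal.tsum_le_tsum hgI
    _ = _ := by
        rw [ENNReal.tsum_mul_right, geom2, ← mul_assoc]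
        congr 1
        conv_rhs => rw [show p = (p-1)+1 by ring]
        rw [ENNReal.rpow_add _ _ (by norm_num) (by norm_num), ENNReal.rpow_one]

def EE (n : ℕ) (p : ℝ) (i : ℕ) : Set (Fin n → ℝ) :=
  Cube n (fun _ => (1/4:ℝ)^i / 2) (bb n p i * (1/4)^i)

lemma ofReal_quarter (n i : ℕ) : ENNReal.ofReal ((1/4:ℝ)^i) ^ n = (((4:ℝ≥0∞)^n)^i)⁻¹ := by
  rw [ENNReal.ofReal_pow (by norm_num), one_div, ENNReal.ofReal_inv_of_pos (by norm_num),
    ENNReal.inv_pow, ENNReal.inv_pow, ← pow_mul, ← pow_mul, mul_comm]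
  norm_num

lemma volume_EE (n : ℕ) (p : ℝ) (i : ℕ) : volume (EE n p i) = vv n p i := by
  rw [EE, volume_Cube, ENNReal.ofReal_mul (bb_pos n p i).le, mul_pow, ofReal_quarter, vv, dd]

lemma measurableSet_EE (n : ℕ) (p : ℝ) (i : ℕ) : MeasurableSet (EE n p i) :=
  measurableSet_Cube _ _ _

lemma EE_bounds {n : ℕ} {p : ℝ} (hp : 1 < p) {i : ℕ} {x : Fin n → ℝ} (hx : x ∈ EE n p i) (k : Fin n) :
    (1/4:ℝ)^i / 2 ≤ x k ∧ x k < (1/4:ℝ)^i := by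
  have h := hx k (mem_univ k)
  have hb := bb_le hp n i
  have h4 : (0:ℝ) < (1/4:ℝ)^i := by positivity
  refine ⟨h.1, h.2.trans_le ?_⟩
  dsimp only
  nlinarith

lemma quarter_le {i m : ℕ} (h : m < i) : (1/4:ℝ)^i ≤ (1/4)^m / 4 := by
  calc (1/4:ℝ)^i ≤ (1/4)^(m+1) := pow_le_pow_of_le_one (by norm_num) (by norm_num) h
    _ = _ := by rw [pow_succ]; ring

/-- Two points of different pieces are far apart. -/
lemma EE_sep {n : ℕ} {p : ℝ} (hp : 1 < p) {i j : ℕ} (hij : i ≠ j)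
    {x y : Fin n → ℝ} (hx : x ∈ EE n p i) (hy : y ∈ EE n p j) (k : Fin n) :
    (1/4:ℝ)^(min i j) / 4 ≤ |x k - y k| := by
  have h1 := EE_bounds hp hx k
  have h2 := EE_bounds hp hy k
  rcases lt_or_gt_of_ne hij with h | h
  · rw [min_eq_left h.le]
    have := quarter_le h
    rw [le_abs]; left; linarith
  · rw [min_eq_right h.le]
    have := quarter_le h
    rw [le_abs]; right; linarith

lemma EE_unique {n : ℕ} (hn : 1 ≤ n) {p : ℝ} (hp : 1 < p) {i j : ℕ} {x : Fin n → ℝ}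
    (hx : x ∈ EE n p i) (hy : x ∈ EE n p j) : i = j := by
  by_contra h
  have := EE_sep hp h hx hy ⟨0, hn⟩
  rw [sub_self, abs_zero] at this
  have h4 : (0:ℝ) < (1/4:ℝ)^(min i j) := by positivity
  linarith

def step (n : ℕ) (p : ℝ) (c : ℕ → ℝ≥0∞) (x : Fin n → ℝ) : ℝ≥0∞ :=
  ∑' i, (EE n p i).indicator (fun _ => c i) x

lemma tsum_ind {n : ℕ} (hn : 1 ≤ n) {p : ℝ} (hp : 1 < p) (F : ℕ → (Fin n → ℝ) → ℝ≥0∞)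
    {j : ℕ} {x : Fin n → ℝ} (hx : x ∈ EE n p j) :
    ∑' i, (EE n p i).indicator (F i) x = F j x := by
  rw [tsum_eq_single j]
  · rw [indicator_of_mem hx]
  · intro i hi
    rw [indicator_of_notMem]
    intro h
    exact hi (EE_unique hn hp h hx)

lemma step_apply {n : ℕ} (hn : 1 ≤ n) {p : ℝ} (hp : 1 < p) (c : ℕ → ℝ≥0∞)
    {j : ℕ} {x : Fin n → ℝ} (hx : x ∈ EE n p j) : step n p c x = c j :=
  tsum_ind hn hp (fun i _ => c i) hx

lemma step_out {n : ℕ} {p : ℝ} (c : ℕ → ℝ≥0∞) {x : Fin n → ℝ} (hx : ∀ j, x ∉ EE n p j) :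
    step n p c x = 0 := by
  rw [step, ENNReal.tsum_eq_zero]
  intro i
  exact indicator_of_notMem (hx i) _

lemma measurable_step (n : ℕ) (p : ℝ) (c : ℕ → ℝ≥0∞) : Measurable (step n p c) := by
  unfold step
  exact Measurable.tsum fun i => measurable_const.indicator (measurableSet_EE n p i)

lemma lint_tsum_ind {n : ℕ} {p : ℝ} (F : ℕ → (Fin n → ℝ) → ℝ≥0∞) (hF : ∀ i, Measurable (F i)) :
    ∫⁻ x, ∑' i, (EE n p i).indicator (F i) x = ∑' i, ∫⁻ x in EE n p i, F i x := by
  rw [lintegral_tsum fun i => ((hF i).indicator (measurableSet_EE n p i)).aemeasurable]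
  congr 1
  funext i
  rw [lintegral_indicator (measurableSet_EE n p i)]

lemma lint_weight {n : ℕ} (hn : 1 ≤ n) {p : ℝ} (hp : 1 < p) (F : (Fin n → ℝ) → ℝ≥0∞)
    (hF : Measurable F) (c : ℕ → ℝ≥0∞) :
    ∫⁻ x, F x * step n p c x = ∑' i, c i * ∫⁻ x in EE n p i, F x := by
  have : ∀ x, F x * step n p c x = ∑' i, (EE n p i).indicator (fun x => c i * F x) x := by
    intro x
    by_cases h : ∃ j, x ∈ EE n p j
    · obtain ⟨j, hj⟩ := h
      rw [step_apply hn hp c hj, tsum_ind hn hp _ hj, mul_comm]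
    · push Not at h
      rw [step_out c h, mul_zero, eq_comm, ENNReal.tsum_eq_zero]
      intro i
      exact indicator_of_notMem (h i) _
  simp_rw [this]
  rw [lint_tsum_ind _ fun i => hF.const_mul (c i)]
  congr 1
  funext i
  rw [lintegral_const_mul _ hF]

def HH (n : ℕ) (p : ℝ) (f : (Fin n → ℝ) → ℝ≥0∞) (m : ℕ) : ℝ≥0∞ :=
  ((4:ℝ≥0∞)^n)^m * ∑' k, ∫⁻ y in EE n p (m+k), f y

lemma avg_le {n : ℕ} (hn : 1 ≤ n) {p : ℝ} (hp : 1 < p) (f : (Fin n → ℝ) → ℝ≥0∞)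
    (hf : Measurable f) (hsupp : ∀ x, (∀ i, x ∉ EE n p i) → f x = 0)
    {j : ℕ} {x : Fin n → ℝ} (hx : x ∈ EE n p j) (a : Fin n → ℝ) {l : ℝ} (hl : 0 < l)
    (hxQ : x ∈ Cube n a l) :
    ∃ m ≤ j, (volume (Cube n a l))⁻¹ * ∫⁻ y in Cube n a l, f y ≤
      2 ^ n * NFn ((EE n p j).indicator f) x + 4 ^ n * HH n p f m := by
  classical
  have hloc := Max_le_N a hl ((EE n p j).indicator f) hxQ
  by_cases hP : ∃ i, i ≠ j ∧ (Cube n a l ∩ EE n p i).Nonempty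
  · set i0 := Nat.find hP with hi0
    obtain ⟨hne, z, hzQ, hzE⟩ := Nat.find_spec hP
    rw [← hi0] at hne hzE
    refine ⟨min i0 j, min_le_right _ _, ?_⟩
    set m := min i0 j with hm
    have hsep := EE_sep hp hne hzE hx ⟨0, hn⟩
    have hlt : (1/4:ℝ)^m / 4 ≤ l := by
      refine hsep.trans ?_
      have h1 := hzQ ⟨0, hn⟩ (mem_univ _)
      have h2 := hxQ ⟨0, hn⟩ (mem_univ _)
      rw [abs_le]
      constructor <;> linarith [h1.1, h1.2, h2.1, h2.2]
    have hpt : ∀ y ∈ Cube n a l, f y ≤ (EE n p j).indicator f y +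
        ∑' k, (EE n p (m+k)).indicator f y := by
      intro y hy
      by_cases hyE : ∃ i, y ∈ EE n p i
      · obtain ⟨i, hi⟩ := hyE
        by_cases hij : i = j
        · subst hij
          rw [indicator_of_mem hi]
          exact le_self_add
        · have h3 : i0 ≤ i := Nat.find_min' hP ⟨hij, y, hy, hi⟩
          have h4 : m + (i - m) = i := by
            have : m ≤ i0 := min_le_left _ _
            omega
          calc f y = (EE n p (m + (i-m))).indicator f y := by rw [h4, indicator_of_mem hi]
            _ ≤ ∑' k, (EE n p (m+k)).indicator f y :=
              ENNReal.le_tsum (f := fun k => (EE n p (m+k)).indicator f y) (i-m)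
            _ ≤ _ := le_add_self
      · push Not at hyE
        rw [hsupp y hyE]
        exact zero_le
    calc (volume (Cube n a l))⁻¹ * ∫⁻ y in Cube n a l, f y
        ≤ (volume (Cube n a l))⁻¹ * ∫⁻ y in Cube n a l, ((EE n p j).indicator f y +
          ∑' k, (EE n p (m+k)).indicator f y) :=
          mul_le_mul_right (setLIntegral_mono' (measurableSet_Cube _ _ _) hpt) _
      _ = (volume (Cube n a l))⁻¹ * (∫⁻ y in Cube n a l, (EE n p j).indicator f y) +
          (volume (Cube n a l))⁻¹ * ∫⁻ y in Cube n a l, ∑' k, (EE n p (m+k)).indicator f y := by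
          rw [lintegral_add_left (hf.indicator (measurableSet_EE n p j)), mul_add]
      _ ≤ 2 ^ n * NFn ((EE n p j).indicator f) x + 4 ^ n * HH n p f m := by
          refine add_le_add hloc ?_
          rw [HH, ← mul_assoc]
          apply mul_le_mul'
          · rw [volume_Cube]
            have : ENNReal.ofReal ((1/4:ℝ)^m / 4) ^ n = (4 ^ n * ((4:ℝ≥0∞)^n)^m)⁻¹ := by
              rw [show (1/4:ℝ)^m / 4 = (1/4)^(m+1) by rw [pow_succ]; ring, ofReal_quarter, pow_succ',]
            rw [← inv_inv (4 ^ n * ((4:ℝ≥0∞)^n)^m), ← this]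
            apply ENNReal.inv_le_inv.2
            gcongr
          · calc _ ≤ ∫⁻ y, ∑' k, (EE n p (m+k)).indicator f y := setLIntegral_le_lintegral _ _
              _ = ∑' k, ∫⁻ y in EE n p (m+k), f y := by
                rw [lintegral_tsum fun i => (hf.indicator (measurableSet_EE n p _)).aemeasurable]
                congr 1
                funext i
                rw [lintegral_indicator (measurableSet_EE n p _)]
              _ ≤ _ := le_rfl
  · push Not at hP
    refine ⟨j, le_rfl, ?_⟩
    refine le_trans ?_ (hloc.trans le_self_add)
    refine mul_le_mul_right (setLIntegral_mono' (measurableSet_Cube _ _ _) ?_) _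
    intro y hy
    by_cases hyE : ∃ i, y ∈ EE n p i
    · obtain ⟨i, hi⟩ := hyE
      by_cases hij : i = j
      · subst hij
        rw [indicator_of_mem hi]
      · have := hP i hij
        have hmem : y ∈ Cube n a l ∩ EE n p i := ⟨hy, hi⟩
        rw [this] at hmem
        exact absurd hmem (notMem_empty y)
    · push Not at hyE
      rw [hsupp y hyE]
      exact zero_le

lemma max_pt {n : ℕ} (hn : 1 ≤ n) {p : ℝ} (hp : 1 < p) (f : (Fin n → ℝ) → ℝ≥0∞)
    (hf : Measurable f) (hsupp : ∀ x, (∀ i, x ∉ EE n p i) → f x = 0)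
    {j : ℕ} {x : Fin n → ℝ} (hx : x ∈ EE n p j) :
    MaxFn f x ^ p ≤ 2 ^ (p-1) * ((2 ^ n) ^ p * NFn ((EE n p j).indicator f) x ^ p
      + (4 ^ n) ^ p * ∑ m ∈ Finset.range (j+1), HH n p f m ^ p) := by
  have hp0 : 0 < p := by linarith
  rw [← ENNReal.le_rpow_inv_iff hp0]
  apply iSup_le; intro a; apply iSup_le; intro l; apply iSup_le; intro hl; apply iSup_le; intro hxQ
  rw [ENNReal.le_rpow_inv_iff hp0]
  obtain ⟨m, hm, h⟩ := avg_le hn hp f hf hsupp hx a hl hxQ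
  refine (ENNReal.rpow_le_rpow h hp0.le).trans ?_
  refine (ENNReal.rpow_add_le_mul_rpow_add_rpow _ _ hp.le).trans ?_
  rw [ENNReal.mul_rpow_of_nonneg _ _ hp0.le, ENNReal.mul_rpow_of_nonneg _ _ hp0.le]
  gcongr
  exact Finset.single_le_sum (f := fun m => HH n p f m ^ p) (fun _ _ => zero_le)
    (Finset.mem_range.2 (by omega))

def ww (n : ℕ) (p : ℝ) : (Fin n → ℝ) → ℝ≥0∞ := step n p fun i => WW i / vv n p i

lemma WW_ne_zero (i : ℕ) : WW i ≠ 0 := by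
  unfold WW
  rw [Ne, ENNReal.ofReal_eq_zero, not_le]
  positivity

lemma ww_ne_zero {n : ℕ} (hn : 1 ≤ n) {p : ℝ} (hp : 1 < p) {i : ℕ} {x : Fin n → ℝ}
    (hx : x ∈ EE n p i) : ww n p x ≠ 0 := by
  rw [ww, step_apply hn hp _ hx]
  exact (ENNReal.div_pos (WW_ne_zero i) (vv_ne_top n p i)).ne'

lemma bdd_max {n : ℕ} (hn : 1 ≤ n) {p : ℝ} (hp : 1 < p) : BddOn MaxFn p (ww n p) (ww n p) := by
  have hp0 : 0 < p := by linarith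
  obtain ⟨C, hC, hHL⟩ := strong_NFn hn hp
  set D : ℝ≥0∞ := 2 ^ (p-1) * ((2 ^ n) ^ p * C + (4 ^ n) ^ p * 2 ^ p) with hD
  have t1 : (2:ℝ≥0∞) ^ (p-1) ≠ ∞ := ENNReal.rpow_ne_top_of_nonneg (by linarith) (by norm_num)
  have t2 : ((2:ℝ≥0∞) ^ n) ^ p ≠ ∞ := ENNReal.rpow_ne_top_of_nonneg (by linarith) (by finiteness)
  have t3 : ((4:ℝ≥0∞) ^ n) ^ p ≠ ∞ := ENNReal.rpow_ne_top_of_nonneg (by linarith) (by finiteness)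
  have t4 : (2:ℝ≥0∞) ^ p ≠ ∞ := ENNReal.rpow_ne_top_of_nonneg (by linarith) (by norm_num)
  have hDt : D ≠ ∞ := by finiteness
  refine ⟨D ^ (p⁻¹), ENNReal.rpow_ne_top_of_nonneg (by positivity) hDt, ?_⟩
  intro f hf hsupp _
  rw [← ENNReal.rpow_mul, inv_mul_cancel₀ hp0.ne', ENNReal.rpow_one]
  have hsupp' : ∀ x, (∀ i, x ∉ EE n p i) → f x = 0 := fun x hx => hsupp x (step_out _ hx)
  set c : ℕ → ℝ≥0∞ := fun i => WW i / vv n p i with hc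
  set I : ℕ → ℝ≥0∞ := fun i => ∫⁻ x in EE n p i, f x ^ p with hI
  have hnorm : ∫⁻ x, f x ^ p * ww n p x = ∑' i, c i * I i :=
    lint_weight hn hp (fun x => f x ^ p) (by fun_prop) c
  rw [hnorm]
  set N : ℕ → (Fin n → ℝ) → ℝ≥0∞ := fun j x => NFn ((EE n p j).indicator f) x ^ p with hN
  have hNm : ∀ j, Measurable (N j) := fun j => (measurable_NFn _).pow_const p
  set B : ℕ → ℝ≥0∞ := fun j => ∑ m ∈ Finset.range (j+1), HH n p f m ^ p with hB
  have hNI : ∀ j, ∫⁻ x in EE n p j, N j x ≤ C * I j := by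
    intro j
    calc _ ≤ ∫⁻ x, N j x := setLIntegral_le_lintegral _ _
      _ ≤ C * ∫⁻ x, ((EE n p j).indicator f x) ^ p := hHL _ (hf.indicator (measurableSet_EE n p j))
      _ = C * I j := by
        simp only [hI]
        rw [← lintegral_indicator (measurableSet_EE n p j)]
        congr 2
        funext x
        by_cases hx : x ∈ EE n p j
        · simp [hx]
        · simp [hx, hp0]
  have hseq := seq_bound hn hp (fun i => ∫⁻ y in EE n p i, f y) I (by
    intro i
    have := jensen_lint (volume.restrict (EE n p i)) hp (f := f) hf.aemeasurable
    rwa [Measure.restrict_apply_univ, volume_EE] at this)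
  calc ∫⁻ x, MaxFn f x ^ p * ww n p x
      ≤ ∫⁻ x, ∑' j, (EE n p j).indicator (fun x => c j * (2 ^ (p-1) * ((2 ^ n) ^ p * N j x
        + (4 ^ n) ^ p * B j))) x := by
        apply lintegral_mono
        intro x
        by_cases h : ∃ j, x ∈ EE n p j
        · obtain ⟨j, hj⟩ := h
          simp only []
          rw [tsum_ind hn hp _ hj, ww, step_apply hn hp _ hj, mul_comm]
          exact mul_le_mul_right (max_pt hn hp f hf hsupp' hj) _
        · push Not at h
          simp only []
          rw [ww, step_out _ h, mul_zero]
          exact zero_le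
    _ = ∑' j, ∫⁻ x in EE n p j, c j * (2 ^ (p-1) * ((2 ^ n) ^ p * N j x + (4 ^ n) ^ p * B j)) := by
        apply lint_tsum_ind
        intro j
        have := hNm j
        fun_prop
    _ = ∑' j, c j * (2 ^ (p-1) * ((2 ^ n) ^ p * ∫⁻ x in EE n p j, N j x) 
          + 2 ^ (p-1) * ((4 ^ n) ^ p * B j * vv n p j)) := by
        congr 1
        funext j
        have := hNm j
        rw [lintegral_const_mul _ (by fun_prop), lintegral_const_mul _ (by fun_prop),
          lintegral_add_right _ measurable_const, lintegral_const_mul _ this, setLIntegral_const,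
          volume_EE, mul_add]
    _ ≤ ∑' j, (2 ^ (p-1) * (2 ^ n) ^ p * C * (c j * I j)
          + 2 ^ (p-1) * (4 ^ n) ^ p * (WW j * B j)) := by
        apply ENNReal.tsum_le_tsum
        intro j
        have e : c j * vv n p j = WW j :=
          ENNReal.div_mul_cancel (vv_ne_zero n p j) (vv_ne_top n p j)
        calc _ ≤ c j * (2 ^ (p-1) * ((2 ^ n) ^ p * (C * I j)) 
                + 2 ^ (p-1) * ((4 ^ n) ^ p * B j * vv n p j)) := by gcongr; exact hNI j
          _ = 2 ^ (p-1) * (2 ^ n) ^ p * C * (c j * I j)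
                + 2 ^ (p-1) * (4 ^ n) ^ p * ((c j * vv n p j) * B j) := by ring
          _ ≤ _ := by rw [e]
    _ = 2 ^ (p-1) * (2 ^ n) ^ p * C * ∑' j, c j * I j
          + 2 ^ (p-1) * (4 ^ n) ^ p * ∑' j, WW j * B j := by
        rw [ENNReal.tsum_add, ENNReal.tsum_mul_left, ENNReal.tsum_mul_left]
    _ ≤ 2 ^ (p-1) * (2 ^ n) ^ p * C * ∑' j, c j * I j
          + 2 ^ (p-1) * (4 ^ n) ^ p * (2 ^ p * ∑' j, c j * I j) := by
        gcongr
        exact hseq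
    _ = D * ∑' j, c j * I j := by rw [hD]; ring

def gg (p : ℝ) (i : ℕ) : ℝ := ((i:ℝ)+1) ^ (-(1 - 1/p))

def ff (n : ℕ) (p : ℝ) : (Fin n → ℝ) → ℝ≥0∞ :=
  step n p fun i => ENNReal.ofReal (gg p i) / dd n p i

lemma ff_norm {n : ℕ} (hn : 1 ≤ n) {p : ℝ} (hp : 1 < p) :
    (∫⁻ x, ff n p x ^ p * ww n p x) < ∞ := by
  have hp0 : 0 < p := by linarith
  have hK := KK_pos n p
  have h1 := lint_weight hn hp (fun x => ff n p x ^ p) ((measurable_step _ _ _).pow_const p)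
    fun i => WW i / vv n p i
  have h2 : ∀ i, WW i / vv n p i * ∫⁻ x in EE n p i, ff n p x ^ p =
      ENNReal.ofReal (1 / KK n p * (1 / ((i:ℝ)+1)^p)) := by
    intro i
    have e1 : ∫⁻ x in EE n p i, ff n p x ^ p =
        (ENNReal.ofReal (gg p i) / dd n p i) ^ p * vv n p i := by
      rw [← volume_EE, ← setLIntegral_const]
      apply setLIntegral_congr_fun (measurableSet_EE n p i)
      intro x hx
      simp only [ff]
      rw [step_apply hn hp _ hx]
    have hg : 0 ≤ gg p i := by unfold gg; positivity
    rw [e1, mul_left_comm, ENNReal.div_mul_cancel (vv_ne_zero n p i) (vv_ne_top n p i),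
      ENNReal.div_rpow_of_nonneg _ _ hp0.le, dd_rpow hn hp, ENNReal.ofReal_rpow_of_nonneg hg hp0.le,
      ← ENNReal.ofReal_div_of_pos (by positivity), WW, ← ENNReal.ofReal_mul (by positivity)]
    congr 1
    have e2 : gg p i ^ p = ((i:ℝ)+1) / ((i:ℝ)+1)^p := by
      rw [gg, ← Real.rpow_mul (by positivity), show -(1-1/p)*p = 1 - p by field_simp; ring,
        Real.rpow_sub (by positivity), Real.rpow_one]
    rw [e2]
    field_simp
  rw [ww, h1]
  simp_rw [h2]
  rw [lt_top_iff_ne_top]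
  apply Summable.tsum_ofReal_ne_top
  apply Summable.mul_left
  have := (summable_nat_add_iff 1).2 (Real.summable_one_div_nat_rpow.2 hp)
  simpa using this

lemma EE_sub {n : ℕ} {p : ℝ} (hp : 1 < p) {i j : ℕ} (hij : i ≤ j) :
    EE n p j ⊆ sCube n 0 (2*i) := by
  intro x hx k _
  have h := EE_bounds hp hx k
  have h4 : (0:ℝ) < (1/4)^j := by positivity
  have h5 : (1/4:ℝ)^j ≤ (1/4)^i := pow_le_pow_of_le_one (by norm_num) (by norm_num) hij
  have h6 : (2:ℝ)^(-((2*i : ℕ):ℤ)) = (1/4)^i := by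
    rw [zpow_neg, zpow_natCast, pow_mul, one_div_pow, one_div]; norm_num
  simp only [if_true, h6]
  constructor <;> linarith [h.1, h.2]

lemma volume_sCube (n i : ℕ) : (volume (sCube n 0 (2*i)))⁻¹ = ((4:ℝ≥0∞)^n)^i := by
  have h6 : (2:ℝ)^(-((2*i : ℕ):ℤ)) = (1/4)^i := by
    rw [zpow_neg, zpow_natCast, pow_mul, one_div_pow, one_div]; norm_num
  rw [sCube, volume_Cube, h6, ofReal_quarter, inv_inv]

lemma TS_lower {n : ℕ} (hn : 1 ≤ n) {p : ℝ} (hp : 1 < p) {j : ℕ} {x : Fin n → ℝ}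
    (hx : x ∈ EE n p j) : ENNReal.ofReal ((j:ℝ)+1) ≤ TS (ff n p) x ^ p := by
  have hp0 : 0 < p := by linarith
  have h1 : ∑ i ∈ Finset.range (j+1), ENNReal.ofReal (gg p i) ≤ TS (ff n p) x := by
    set F : ℕ × ℕ → ℝ≥0∞ := fun q => (sCube n q.1 q.2).indicator
      (fun _ => (volume (sCube n q.1 q.2))⁻¹ * ∫⁻ y in sCube n q.1 q.2, ff n p y) x with hF
    calc _ ≤ ∑ i ∈ Finset.range (j+1), F (0, 2*i) := by
          apply Finset.sum_le_sum
          intro i hi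
          rw [Finset.mem_range] at hi
          simp only [hF]
          rw [indicator_of_mem (EE_sub hp (by omega) hx), volume_sCube]
          calc ENNReal.ofReal (gg p i)
              = ((4:ℝ≥0∞)^n)^i * (ENNReal.ofReal (gg p i) / dd n p i * vv n p i) := by
                rw [mul_left_comm, R_vv, ENNReal.div_mul_cancel (dd_ne_zero n p i) (dd_ne_top n p i)]
            _ = ((4:ℝ≥0∞)^n)^i * ∫⁻ y in EE n p i, ff n p y := by
                congr 1
                rw [← volume_EE, ← setLIntegral_const]
                apply setLIntegral_congr_fun (measurableSet_EE n p i)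
                intro x hx
                simp only [ff]
                rw [step_apply hn hp _ hx]
            _ ≤ _ := by
                gcongr
                exact EE_sub hp le_rfl
      _ ≤ ∑' i, F (0, 2*i) := ENNReal.sum_le_tsum _
      _ ≤ ∑' q, F q := ENNReal.tsum_comp_le_tsum_of_injective
          (f := fun i : ℕ => ((0, 2*i) : ℕ × ℕ)) (by intro a b h; simpa using h) F
  have h2 : ENNReal.ofReal (((j:ℝ)+1)^(1/p)) ≤ TS (ff n p) x := by
    refine le_trans ?_ h1
    calc ENNReal.ofReal (((j:ℝ)+1)^(1/p)) 
        = ∑ i ∈ Finset.range (j+1), ENNReal.ofReal (gg p j) := by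
          rw [Finset.sum_const, Finset.card_range, nsmul_eq_mul, ← ENNReal.ofReal_natCast,
            ← ENNReal.ofReal_mul (by positivity), gg]
          congr 1
          push_cast
          rw [show (1/p) = 1 + (-(1-1/p)) by ring, Real.rpow_add (by positivity), Real.rpow_one]
          ring_nf
      _ ≤ _ := by
          apply Finset.sum_le_sum
          intro i hi
          rw [Finset.mem_range] at hi
          apply ENNReal.ofReal_le_ofReal
          unfold gg
          apply Real.rpow_le_rpow_of_nonpos (by positivity)
          · have : (i:ℝ) ≤ j := by exact_mod_cast (by omega : i ≤ j)
            linarith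
          · have : 1/p ≤ 1 := by rw [div_le_one hp0]; exact hp.le
            linarith
  calc ENNReal.ofReal ((j:ℝ)+1) = ENNReal.ofReal (((j:ℝ)+1)^(1/p)) ^ p := by
        rw [ENNReal.ofReal_rpow_of_nonneg (by positivity) hp0.le, ← Real.rpow_mul (by positivity),
          one_div_mul_cancel hp0.ne', Real.rpow_one]
    _ ≤ _ := ENNReal.rpow_le_rpow h2 hp0.le

lemma TS_top {n : ℕ} (hn : 1 ≤ n) {p : ℝ} (hp : 1 < p) :
    (∫⁻ x, TS (ff n p) x ^ p * ww n p x) = ∞ := by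
  rw [eq_top_iff]
  calc ∞ = ∑' j : ℕ, ENNReal.ofReal (1 / ((j:ℝ)+2)) := by
        by_contra h
        have h1 := ENNReal.summable_toReal (Ne.symm h)
        have h2 : Summable fun j : ℕ => 1 / ((j:ℝ)+2) := by
          refine h1.congr fun j => ?_
          rw [ENNReal.toReal_ofReal (by positivity)]
        apply Real.not_summable_one_div_natCast
        rw [← summable_nat_add_iff 2]
        simpa using h2
    _ = ∑' j, ∫⁻ x in EE n p j, ENNReal.ofReal ((j:ℝ)+1) * (WW j / vv n p j) := by
        congr 1
        funext j
        rw [setLIntegral_const, volume_EE, mul_assoc,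
          ENNReal.div_mul_cancel (vv_ne_zero n p j) (vv_ne_top n p j), WW,
          ← ENNReal.ofReal_mul (by positivity)]
        congr 1
        field_simp
    _ = ∫⁻ x, ∑' j, (EE n p j).indicator
          (fun _ => ENNReal.ofReal ((j:ℝ)+1) * (WW j / vv n p j)) x :=
        (lint_tsum_ind _ fun _ => measurable_const).symm
    _ ≤ _ := by
        apply lintegral_mono
        intro x
        simp only []
        by_cases h : ∃ j, x ∈ EE n p j
        · obtain ⟨j, hj⟩ := h
          rw [tsum_ind hn hp _ hj, ww, step_apply hn hp _ hj]
          gcongr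
          exact TS_lower hn hp hj
        · push Not at h
          refine le_of_eq_of_le ?_ zero_le
          rw [ENNReal.tsum_eq_zero]
          intro i
          exact indicator_of_notMem (h i) _

/-- For every `n ≥ 1` and `p ∈ (1,∞)` there is a single weight `w` such that
`M : L^p(w) → L^p(w)` is bounded while the sparse operator `T_S` is not bounded on `L^p(w)`;
in fact there is a (nonnegative) `f ∈ L^p(w)` with `‖T_S f‖_{L^p(w)} = ∞`. -/
theorem muckenhoupt_wheeden_sparse_one_weight (n : ℕ) (hn : 1 ≤ n) (p : ℝ) (hp : 1 < p) :
    ∃ w : (Fin n → ℝ) → ℝ≥0∞, Measurable w ∧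
      BddOn MaxFn p w w ∧
      ¬ BddOn TS p w w ∧
      ∃ f : (Fin n → ℝ) → ℝ≥0∞, Measurable f ∧ (∀ x, w x = 0 → f x = 0) ∧
        (∫⁻ x, f x ^ p * w x) < ∞ ∧ (∫⁻ x, TS f x ^ p * w x) = ∞ := by
  refine ⟨ww n p, measurable_step _ _ _, bdd_max hn hp, ?_, ff n p, measurable_step _ _ _, ?_,
    ff_norm hn hp, TS_top hn hp⟩
  · rintro ⟨C, hC, h⟩
    have hs : ∀ x, ww n p x = 0 → ff n p x = 0 := fun x hx =>
      step_out _ fun j hj => ww_ne_zero hn hp hj hx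
    have h1 := h (ff n p) (measurable_step _ _ _) hs (ff_norm hn hp)
    rw [TS_top hn hp, top_le_iff] at h1
    exact ENNReal.mul_ne_top (ENNReal.rpow_ne_top_of_nonneg (by linarith) hC)
      (ff_norm hn hp).ne h1
  · exact fun x hx => step_out _ fun j hj => ww_ne_zero hn hp hj hx
end
end

section
/- Fix integers n ≥ 1 and k ≥ 1. For every x ∈ ⋃_{m≥1} Ω_m(k) (that is, every point of the support of w_k), one has M(w_k)(x) ≤ 9^n · w_k(x). -/
open MeasureTheory Set ENNReal

noncomputable section

/-- `S` is a union of grid intervals of length `2^{-N}`. -/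
def Lev (N : ℕ) (S : Set ℝ) : Prop :=
  ∀ s t : ℝ, ⌊s * 2^N⌋ = ⌊t * 2^N⌋ → s ∈ S → t ∈ S

lemma Lev.inter {N : ℕ} {S T : Set ℝ} (hS : Lev N S) (hT : Lev N T) : Lev N (S ∩ T) :=
  fun s t h hs => ⟨hS s t h hs.1, hT s t h hs.2⟩

lemma floor_mono_level {M N : ℕ} (h : M ≤ N) {s t : ℝ} (hst : ⌊s * 2^N⌋ = ⌊t * 2^N⌋) :
    ⌊s * 2^M⌋ = ⌊t * 2^M⌋ := by
  obtain ⟨d, rfl⟩ := Nat.exists_eq_add_of_le h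
  have key : ∀ u : ℝ, ⌊u * 2^M⌋ = ⌊u * 2^(M+d)⌋ / (2^d : ℕ) := by
    intro u
    rw [← Int.floor_div_natCast]
    congr 1
    push_cast
    rw [pow_add]
    field_simp
  rw [key, key, hst]

lemma Lev.mono {M N : ℕ} (h : M ≤ N) {S : Set ℝ} (hS : Lev M S) : Lev N S :=
  fun s t hst hs => hS s t (floor_mono_level h hst) hs

lemma vol_fract_le (N : ℕ) (S : Set ℝ) (hS : Lev N S) (hm : MeasurableSet S)
    (α β : ℝ) :
    volume (S ∩ {t : ℝ | Int.fract (t * 2^N) ∈ Ico α β}) ≤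
      ENNReal.ofReal (β - α) * volume S := by
  have hf : Measurable (fun t : ℝ => ⌊t * 2^N⌋) :=
    Int.measurable_floor.comp (measurable_id.mul_const _)
  have hE : MeasurableSet {t : ℝ | Int.fract (t * 2^N) ∈ Ico α β} :=
    (measurable_fract.comp (measurable_id.mul_const _)) measurableSet_Ico
  have hI : ∀ c : ℤ, MeasurableSet ((fun t : ℝ => ⌊t * 2^N⌋) ⁻¹' {c}) :=
    fun c => hf (measurableSet_singleton c)
  have hdec : ∀ X : Set ℝ, MeasurableSet X →
      volume X = ∑' c : ℤ, volume (X ∩ (fun t : ℝ => ⌊t * 2^N⌋) ⁻¹' {c}) := by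
    intro X hX
    rw [← measure_iUnion]
    · congr 1
      ext t
      simp
    · intro c d hcd
      refine Set.disjoint_left.2 ?_
      rintro t ⟨_, h1⟩ ⟨_, h2⟩
      exact hcd (h1.symm.trans h2)
    · exact fun c => hX.inter (hI c)
  rw [hdec _ (hm.inter hE), hdec S hm, ← ENNReal.tsum_mul_left]
  refine ENNReal.tsum_le_tsum fun c => ?_
  have hp : (0:ℝ) < 2^N := by positivity
  have hIc : (fun t : ℝ => ⌊t * 2^N⌋) ⁻¹' {c} = Ico ((c:ℝ) / 2^N) ((c+1:ℝ)/2^N) := by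
    ext t
    simp only [mem_preimage, mem_singleton_iff, Int.floor_eq_iff, mem_Ico]
    rw [div_le_iff₀ hp, lt_div_iff₀ hp]
  by_cases hne : (S ∩ (fun t : ℝ => ⌊t * 2^N⌋) ⁻¹' {c}).Nonempty
  · obtain ⟨s, hs, hsc⟩ := hne
    have hsub : (fun t : ℝ => ⌊t * 2^N⌋) ⁻¹' {c} ⊆ S := by
      intro t ht
      exact hS s t (hsc.trans ht.symm) hs
    rw [Set.inter_eq_right.2 hsub, hIc, Real.volume_Ico]
    have : S ∩ {t : ℝ | Int.fract (t * 2^N) ∈ Ico α β} ∩ Ico ((c:ℝ) / 2^N) ((c+1:ℝ)/2^N) ⊆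
        Ico ((c + α) / 2^N) ((c+β)/2^N) := by
      rintro t ⟨⟨_, h1, h2⟩, h3⟩
      rw [← hIc] at h3
      have h3' : ⌊t * 2^N⌋ = c := h3
      have h4 := Int.floor_add_fract (t * 2^N)
      rw [h3'] at h4
      constructor
      · rw [div_le_iff₀ hp]; linarith
      · rw [lt_div_iff₀ hp]; linarith
    refine (measure_mono this).trans ?_
    rw [Real.volume_Ico]
    have e1 : (c+β)/2^N - (c + α) / 2^N = (β - α) * (1 / 2^N) := by ring
    have e2 : ((c:ℝ)+1)/2^N - c / 2^N = 1 / 2^N := by ring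
    rw [e1, e2, ENNReal.ofReal_mul' (by positivity)]
  · have : S ∩ {t : ℝ | Int.fract (t * 2^N) ∈ Ico α β} ∩ (fun t : ℝ => ⌊t * 2^N⌋) ⁻¹' {c} = ∅ := by
      rw [Set.not_nonempty_iff_eq_empty] at hne
      refine Set.subset_empty_iff.1 (hne ▸ ?_)
      exact Set.inter_subset_inter_left _ Set.inter_subset_left
    rw [this]; simp

lemma digit_succ (k j : ℕ) (t : ℝ) :
    digit k (j+1) t = ⌊Int.fract (t * 2^(k*j)) * 2^k⌋ := by
  have hp : (0:ℝ) < 2^k := by positivity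
  have h0 := Int.fract_nonneg (t * 2^(k*j))
  have h1 := Int.fract_lt_one (t * 2^(k*j))
  have e : t * 2^(k*(j+1)) = Int.fract (t * 2^(k*j)) * 2^k + ((⌊t * 2^(k*j)⌋ * 2^k : ℤ) : ℝ) := by
    have h4 := Int.floor_add_fract (t * 2^(k*j))
    push_cast
    rw [← add_mul, add_comm (Int.fract _), h4]
    ring
  unfold digit
  rw [e, Int.floor_add_intCast, Int.add_mul_emod_self_right]
  apply Int.emod_eq_of_lt
  · exact Int.floor_nonneg.2 (by positivity)
  · rw [Int.floor_lt]
    push_cast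
    nlinarith

lemma digit_lt_fract {k j : ℕ} (hk : 1 ≤ k) {t : ℝ} (h : digit k (j+1) t < 2^(k-1)) :
    Int.fract (t * 2^(k*j)) ∈ Ico (0:ℝ) (1/2) := by
  refine ⟨Int.fract_nonneg _, ?_⟩
  rw [digit_succ, Int.floor_lt] at h
  obtain ⟨k, rfl⟩ := Nat.exists_eq_add_of_le' hk
  have hp : (0:ℝ) < 2^k := by positivity
  simp only [Nat.add_sub_cancel] at h
  push_cast at h
  rw [pow_succ] at h
  by_contra hc
  push Not at hc
  nlinarith

lemma digit_eq_fract {k j : ℕ} {t : ℝ} (h : digit k (j+1) t = 2^(k-1)) :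
    Int.fract (t * 2^(k*j)) ∈ Ico ((2:ℝ)^(k-1) / 2^k) ((2^(k-1) + 1)/ 2^k) := by
  have hp : (0:ℝ) < 2^k := by positivity
  rw [digit_succ, Int.floor_eq_iff] at h
  push_cast at h
  constructor
  · rw [div_le_iff₀ hp]; exact h.1
  · rw [lt_div_iff₀ hp]; exact h.2

lemma digit_measurable (k j : ℕ) : Measurable (digit k j) := by
  have hf : Measurable (fun t : ℝ => ⌊t * 2^(k*j)⌋) :=
    Int.measurable_floor.comp (measurable_id.mul_const _)
  exact (measurable_from_top (f := fun z : ℤ => z % 2^k)).comp hf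

/-- One-dimensional admissible set of level `j`. -/
def A1 (k j : ℕ) : Set ℝ :=
  {t | t ∈ Ico (0:ℝ) 1 ∧ ∀ i, 1 ≤ i → i ≤ j → digit k i t < 2^(k-1)}

/-- One-dimensional version of `Omega`. -/
def O1 (k j : ℕ) : Set ℝ := A1 k j ∩ {t | digit k (j+1) t = 2^(k-1)}

lemma A1_meas (k j : ℕ) : MeasurableSet (A1 k j) := by
  unfold A1
  have : {t : ℝ | t ∈ Ico (0:ℝ) 1 ∧ ∀ i, 1 ≤ i → i ≤ j → digit k i t < 2^(k-1)} =
    Ico (0:ℝ) 1 ∩ ⋂ i : ℕ, ⋂ _ : 1 ≤ i, ⋂ _ : i ≤ j, (digit k i) ⁻¹' (Iio (2^(k-1))) := by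
    ext t; simp
  rw [this]
  refine measurableSet_Ico.inter (MeasurableSet.iInter fun i => MeasurableSet.iInter fun _ =>
    MeasurableSet.iInter fun _ => digit_measurable k i measurableSet_Iio)

lemma O1_meas (k j : ℕ) : MeasurableSet (O1 k j) :=
  (A1_meas k j).inter (digit_measurable k (j+1) (measurableSet_singleton _))

lemma A1_lev (k j : ℕ) : Lev (k*j) (A1 k j) := by
  rintro s t hst ⟨⟨h0, h1⟩, h⟩
  refine ⟨?_, ?_⟩
  · have := floor_mono_level (Nat.zero_le _) hst
    simp only [pow_zero, mul_one] at this
    rw [Int.floor_eq_zero_iff.2 ⟨h0, h1⟩] at this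
    exact Int.floor_eq_zero_iff.1 this.symm
  · intro i hi hij
    have := h i hi hij
    unfold digit at this ⊢
    rwa [← floor_mono_level (Nat.mul_le_mul_left k hij) hst]

lemma Omega_eq (n k j : ℕ) : Omega n k (j+1) = Set.univ.pi (fun _ : Fin n => O1 k j) := by
  ext x
  simp only [Omega, O1, A1, mem_ofPred_eq, mem_pi, mem_univ, true_implies, mem_inter_iff,
    Nat.lt_succ_iff]
  constructor
  · rintro ⟨h1, h2⟩ i
    exact ⟨⟨h1 i, (h2 i).1⟩, (h2 i).2⟩
  · intro h
    exact ⟨fun i => (h i).1.1, fun i => ⟨(h i).1.2, (h i).2⟩⟩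

lemma vol_A1 (k m : ℕ) (hk : 1 ≤ k) (T : Set ℝ) (hT : Lev (k*m) T) (hTm : MeasurableSet T)
    (i : ℕ) :
    volume (A1 k (m+i) ∩ T) ≤ (2⁻¹ : ℝ≥0∞)^i * volume T := by
  induction i with
  | zero => simpa using measure_mono Set.inter_subset_right
  | succ i ih =>
    have hsub : A1 k (m+(i+1)) ∩ T ⊆
        (A1 k (m+i) ∩ T) ∩ {t : ℝ | Int.fract (t * 2^(k*(m+i))) ∈ Ico (0:ℝ) (1/2)} := by
      rintro t ⟨⟨h1, h2⟩, h3⟩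
      refine ⟨⟨⟨h1, fun a ha hb => h2 a ha (by omega)⟩, h3⟩, ?_⟩
      exact digit_lt_fract hk (h2 (m+i+1) (by omega) (by omega))
    have hl : Lev (k*(m+i)) (A1 k (m+i) ∩ T) :=
      (A1_lev _ _).inter (hT.mono (Nat.mul_le_mul_left k (by omega)))
    refine (measure_mono hsub).trans ((vol_fract_le _ _ hl ((A1_meas _ _).inter hTm) _ _).trans ?_)
    have : ENNReal.ofReal (1/2 - 0) = 2⁻¹ := by
      rw [sub_zero, one_div, ENNReal.ofReal_inv_of_pos (by norm_num)]; simp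
    rw [this, pow_succ, mul_comm _ (2⁻¹ : ℝ≥0∞), mul_assoc]
    gcongr

lemma vol_O1 (k m : ℕ) (hk : 1 ≤ k) (T : Set ℝ) (hT : Lev (k*m) T) (hTm : MeasurableSet T)
    (i : ℕ) :
    volume (O1 k (m+i) ∩ T) ≤ ((2^k)⁻¹ * (2⁻¹ : ℝ≥0∞)^i) * volume T := by
  have hsub : O1 k (m+i) ∩ T ⊆ (A1 k (m+i) ∩ T) ∩ {t : ℝ | Int.fract (t * 2^(k*(m+i))) ∈
      Ico ((2:ℝ)^(k-1) / 2^k) ((2^(k-1) + 1)/ 2^k)} := by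
    rintro t ⟨⟨h1, h2⟩, h3⟩
    exact ⟨⟨h1, h3⟩, digit_eq_fract h2⟩
  have hl : Lev (k*(m+i)) (A1 k (m+i) ∩ T) :=
    (A1_lev _ _).inter (hT.mono (Nat.mul_le_mul_left k (by omega)))
  refine (measure_mono hsub).trans ((vol_fract_le _ _ hl ((A1_meas _ _).inter hTm) _ _).trans ?_)
  have : ENNReal.ofReal ((2^(k-1) + 1)/ 2^k - (2:ℝ)^(k-1) / 2^k) = (2^k)⁻¹ := by
    have : ((2^(k-1) + 1)/ 2^k - (2:ℝ)^(k-1) / 2^k) = (2^k)⁻¹ := by ring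
    rw [this, ENNReal.ofReal_inv_of_pos (by positivity), ENNReal.ofReal_pow (by norm_num)]; simp
  rw [this, mul_assoc]
  gcongr
  exact vol_A1 k m hk T hT hTm i

/-- The ratio in `wk`. -/
def lam (n k : ℕ) : ℝ≥0∞ := (2:ℝ≥0∞)^(k*n) / ((2:ℝ≥0∞)^((k-1)*n) + 1)

lemma lam_split (n k : ℕ) (hk : 1 ≤ k) : (2:ℝ≥0∞)^(k*n) = 2^((k-1)*n) * 2^n := by
  obtain ⟨k, rfl⟩ := Nat.exists_eq_add_of_le' hk
  simp only [Nat.add_sub_cancel]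
  rw [← pow_add]; congr 1; ring

lemma lam_le (n k : ℕ) (hk : 1 ≤ k) : lam n k ≤ 2^n := by
  unfold lam
  apply ENNReal.div_le_of_le_mul
  rw [lam_split n k hk, mul_comm]
  gcongr
  exact le_self_add

lemma one_le_lam (n k : ℕ) (hn : 1 ≤ n) (hk : 1 ≤ k) : 1 ≤ lam n k := by
  unfold lam
  rw [ENNReal.le_div_iff_mul_le (Or.inl (by simp)) (Or.inl (by finiteness)), one_mul,
    lam_split n k hk]
  calc (2:ℝ≥0∞)^((k-1)*n) + 1 ≤ 2^((k-1)*n) + 2^((k-1)*n) := by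
        gcongr; exact one_le_pow₀ (by norm_num)
    _ = 2^((k-1)*n) * 2^1 := by ring
    _ ≤ _ := by gcongr; norm_num

lemma lam_sum (n k m : ℕ) (hk : 1 ≤ k) :
    ∑' i : ℕ, lam n k ^ (m+i+1) * ((2^k)⁻¹ * (2⁻¹ : ℝ≥0∞)^i)^n ≤ lam n k ^ m := by
  set q : ℝ≥0∞ := ((2:ℝ≥0∞)^((k-1)*n) + 1)⁻¹ with hq
  have hl : lam n k = 2^(k*n) * q := by rw [lam, div_eq_mul_inv]
  have h1 : lam n k * ((2^k)⁻¹)^n = q := by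
    rw [hl, mul_right_comm, ← ENNReal.inv_pow, ← pow_mul,
      ENNReal.mul_inv_cancel (by positivity) (by finiteness), one_mul]
  have h2 : lam n k * (2⁻¹)^n = 2^((k-1)*n) * q := by
    rw [hl, lam_split n k hk, mul_right_comm, ← ENNReal.inv_pow, mul_assoc (2^((k-1)*n)),
      ENNReal.mul_inv_cancel (by positivity) (by finiteness), mul_one]
  have h3 : q + 2^((k-1)*n) * q = 1 := by
    have : q + 2^((k-1)*n) * q = ((2:ℝ≥0∞)^((k-1)*n) + 1) * q := by ring
    rw [this, hq, ENNReal.mul_inv_cancel (by simp) (by finiteness)]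
  have h4 : ∀ i : ℕ, lam n k ^ (m+i+1) * ((2^k)⁻¹ * (2⁻¹ : ℝ≥0∞)^i)^n =
      lam n k ^ m * q * (2^((k-1)*n) * q)^i := by
    intro i
    rw [← h2]
    rw [mul_pow, ← pow_mul, pow_add, pow_add]
    conv_rhs => rw [← h1]
    ring
  simp_rw [h4]
  rw [ENNReal.tsum_mul_left, ENNReal.tsum_geometric]
  have hqt : q ≠ ∞ := by rw [hq]; simp
  have h5 : 1 - 2^((k-1)*n) * q = q := by
    rw [← h3]
    exact ENNReal.add_sub_cancel_right (by finiteness)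
  rw [h5, mul_assoc]
  calc _ ≤ lam n k ^ m * 1 := by gcongr; exact ENNReal.mul_inv_le_one q
    _ = _ := mul_one _

lemma Omega_unique {n k i j : ℕ} (hn : 1 ≤ n) {x : Fin n → ℝ} (hi : x ∈ Omega n k (i+1))
    (hj : x ∈ Omega n k (j+1)) : i = j := by
  have aux : ∀ i j : ℕ, x ∈ Omega n k (i+1) → x ∈ Omega n k (j+1) → ¬ i < j := by
    intro i j hi hj hij
    have h1 := (hi.2 ⟨0, hn⟩).2
    have h2 := (hj.2 ⟨0, hn⟩).1 (i+1) (by omega) (by omega)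
    omega
  have := aux i j hi hj
  have := aux j i hj hi
  omega

lemma wk_eq {n k j : ℕ} (hn : 1 ≤ n) {x : Fin n → ℝ} (hj : x ∈ Omega n k (j+1)) :
    wk n k x = lam n k ^ (j+1) := by
  unfold wk
  rw [tsum_eq_single j]
  · rw [Set.indicator_of_mem hj]; rfl
  · intro i hi
    exact Set.indicator_of_notMem (fun h => hi (Omega_unique hn h hj)) _

lemma wk_le {n k m : ℕ} (hn : 1 ≤ n) (hk : 1 ≤ k) {x : Fin n → ℝ}
    (h : ∀ j, x ∈ Omega n k (j+1) → j + 1 ≤ m) : wk n k x ≤ lam n k ^ m := by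
  by_cases hx : ∃ j, x ∈ Omega n k (j+1)
  · obtain ⟨j, hj⟩ := hx
    rw [wk_eq hn hj]
    exact pow_le_pow_right₀ (one_le_lam n k hn hk) (h j hj)
  · push Not at hx
    unfold wk
    simp [hx]

lemma Omega_meas (n k j : ℕ) : MeasurableSet (Omega n k (j+1)) := by
  rw [Omega_eq]
  exact MeasurableSet.univ_pi fun _ => O1_meas k j

lemma int_wk_le (n k m : ℕ) (hn : 1 ≤ n) (hk : 1 ≤ k) (T : Fin n → Set ℝ)
    (hT : ∀ i, Lev (k*m) (T i)) (hTm : ∀ i, MeasurableSet (T i)) :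
    ∫⁻ y in Set.univ.pi T, wk n k y ≤ lam n k ^ m * volume (Set.univ.pi T) := by
  set B : Set (Fin n → ℝ) := Set.univ.pi (fun _ => A1 k m) with hB
  have hBm : MeasurableSet B := MeasurableSet.univ_pi fun _ => A1_meas k m
  have hPm : MeasurableSet (Set.univ.pi T) := MeasurableSet.univ_pi hTm
  rw [← lintegral_inter_add_sdiff _ _ hBm, ← measure_inter_add_sdiff (Set.univ.pi T) hBm, mul_add]
  have hsubB : ∀ j, m ≤ j → Omega n k (j+1) ⊆ B := by
    intro j hj x hx
    rw [Omega_eq] at hx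
    intro i _
    have := (hx i trivial).1
    exact ⟨this.1, fun a ha hb => this.2 a ha (by omega)⟩
  refine add_le_add ?_ ?_
  · unfold wk
    rw [lintegral_tsum (fun j => (measurable_const.indicator (Omega_meas n k j)).aemeasurable)]
    have hterm : ∀ j, ∫⁻ y in Set.univ.pi T ∩ B, (Omega n k (j+1)).indicator
        (fun _ => ((2:ℝ≥0∞)^(k*n) / ((2:ℝ≥0∞)^((k-1)*n) + 1))^(j+1)) y =
        lam n k ^ (j+1) * volume (Omega n k (j+1) ∩ (Set.univ.pi T ∩ B)) := by
      intro j
      rw [lintegral_indicator_const (Omega_meas n k j), Measure.restrict_apply (Omega_meas n k j)]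
      rfl
    simp_rw [hterm]
    rw [← Summable.sum_add_tsum_nat_add' (k := m) ENNReal.summable]
    have hz : ∑ j ∈ Finset.range m,
        lam n k ^ (j+1) * volume (Omega n k (j+1) ∩ (Set.univ.pi T ∩ B)) = 0 := by
      refine Finset.sum_eq_zero fun j hj => ?_
      have hj := Finset.mem_range.1 hj
      have : Omega n k (j+1) ∩ (Set.univ.pi T ∩ B) = ∅ := by
        refine Set.eq_empty_iff_forall_notMem.2 ?_
        rintro x ⟨h1, _, h2⟩
        have h3 := (h1.2 ⟨0, hn⟩).2
        have h4 := (h2 ⟨0, hn⟩ trivial).2 (j+1) (by omega) (by omega)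
        omega
      rw [this]; simp
    rw [hz, zero_add]
    have hvol : ∀ i, volume (Omega n k (i+m+1) ∩ (Set.univ.pi T ∩ B)) ≤
        ((2^k)⁻¹ * (2⁻¹ : ℝ≥0∞)^i)^n * volume (Set.univ.pi T ∩ B) := by
      intro i
      rw [Omega_eq, hB, ← Set.pi_inter_distrib, ← Set.pi_inter_distrib, volume_pi_pi, volume_pi_pi]
      calc _ ≤ ∏ l : Fin n, ((2^k)⁻¹ * (2⁻¹ : ℝ≥0∞)^i) * volume (T l ∩ A1 k m) := by
            refine Finset.prod_le_prod' fun l _ => ?_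
            rw [add_comm i m]
            exact vol_O1 k m hk _ ((hT l).inter (A1_lev k m)) ((hTm l).inter (A1_meas k m)) i
        _ = _ := by
            rw [Finset.prod_mul_distrib]
            simp
    calc _ ≤ ∑' i : ℕ, (lam n k ^ (m+i+1) * ((2^k)⁻¹ * (2⁻¹ : ℝ≥0∞)^i)^n) *
            volume (Set.univ.pi T ∩ B) := by
          refine ENNReal.tsum_le_tsum fun i => ?_
          rw [mul_assoc, add_comm m i]
          gcongr
          exact hvol i
      _ ≤ _ := by
          rw [ENNReal.tsum_mul_right]
          gcongr
          exact lam_sum n k m hk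
  · rw [← setLIntegral_const]
    refine setLIntegral_mono' (hPm.diff hBm) ?_
    rintro x ⟨_, hx⟩
    refine wk_le hn hk fun j hj => ?_
    by_contra hc
    exact hx (hsubB j (by omega) hj)

lemma Ico_lev (N : ℕ) (p q : ℤ) : Lev N (Ico ((p:ℝ)/2^N) ((q:ℝ)/2^N)) := by
  have hp : (0:ℝ) < 2^N := by positivity
  rintro s t hst ⟨h1, h2⟩
  rw [div_le_iff₀ hp, ← Int.le_floor] at h1
  rw [lt_div_iff₀ hp, ← Int.floor_lt] at h2
  rw [hst] at h1 h2
  constructor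
  · rwa [div_le_iff₀ hp, ← Int.le_floor]
  · rwa [lt_div_iff₀ hp, ← Int.floor_lt]

lemma A1_one_even {m : ℕ} {s : ℝ} (hs : s ∈ A1 1 m) : ⌊s * 2^(1*m)⌋ % 2 = 0 := by
  rcases m with _ | m
  · have := Int.floor_eq_zero_iff.2 hs.1
    simp [this]
  · have := hs.2 (m+1) (by omega) le_rfl
    unfold digit at this
    norm_num at this ⊢
    omega

lemma floor_gap {k m : ℕ} (hk : 1 ≤ k) {s t : ℝ} (hs : s ∈ O1 k m) (ht : t ∈ A1 k (m+2))
    (h : ⌊s * 2^(k*(m+1))⌋ ≤ ⌊t * 2^(k*(m+1))⌋) :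
    ⌊s * 2^(k*(m+1))⌋ + 2 ≤ ⌊t * 2^(k*(m+1))⌋ := by
  have htd := ht.2 (m+1) (by omega) (by omega)
  have hsd : digit k (m+1) s = 2^(k-1) := hs.2
  have htA : t ∈ A1 k m := ⟨ht.1, fun a ha hb => ht.2 a ha (by omega)⟩
  unfold digit at htd hsd
  rcases Nat.lt_or_ge 1 k with hk2 | hk1
  · obtain ⟨k, rfl⟩ := Nat.exists_eq_add_of_le' hk2
    generalize ⌊s * 2^((k+2)*(m+1))⌋ = X at *
    generalize ⌊t * 2^((k+2)*(m+1))⌋ = Y at *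
    have e : k + (1 + 1) - 1 = k + 1 := by omega
    simp only [Nat.succ_eq_add_one, e] at htd hsd
    have hh : (2:ℤ) ≤ 2^(k+1) := by
      rw [pow_succ]
      have : (1:ℤ) ≤ 2^k := one_le_pow₀ (by norm_num)
      linarith
    have e2 : (2:ℤ)^(k+(1+1)) = 2 * 2^(k+1) := by ring
    rw [e2] at htd hsd
    generalize (2:ℤ)^(k+1) = H at *
    have hX := Int.emod_add_mul_ediv X (2*H)
    have hY := Int.emod_add_mul_ediv Y (2*H)
    have hr := Int.emod_nonneg Y (show 2*H ≠ 0 by omega)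
    generalize X / (2*H) = P at *
    generalize Y / (2*H) = Q at *
    generalize Y % (2*H) = r at *
    have hPQ : P + 1 ≤ Q := by
      by_contra hc
      have : Q ≤ P := by omega
      nlinarith
    nlinarith
  · obtain rfl : k = 1 := by omega
    have key : ∀ u : ℝ, ⌊u * 2^(1*m)⌋ = ⌊u * 2^(1*(m+1))⌋ / 2 := by
      intro u
      have := Int.floor_div_natCast (u * 2^(1*(m+1))) 2
      push_cast at this
      rw [← this]
      congr 1
      ring
    have e1 := A1_one_even hs.1
    have e2 := A1_one_even htA
    rw [key] at e1 e2
    norm_num at htd hsd e1 e2 h ⊢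
    omega

lemma sep {k m : ℕ} (hk : 1 ≤ k) {s t : ℝ} (hs : s ∈ O1 k m) (ht : t ∈ A1 k (m+2)) :
    1/2 < |s - t| * 2^(k*(m+1)) := by
  have hp : (0:ℝ) < 2^(k*(m+1)) := by positivity
  have hf := (digit_lt_fract hk (ht.2 (m+2) (by omega) (by omega))).2
  have htd := ht.2 (m+1) (by omega) (by omega)
  have hsd : digit k (m+1) s = 2^(k-1) := hs.2
  have hs1 := Int.floor_le (s * 2^(k*(m+1)))
  have hs2 := Int.lt_floor_add_one (s * 2^(k*(m+1)))
  have ht1 := Int.floor_le (t * 2^(k*(m+1)))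
  have ht3 := Int.floor_add_fract (t * 2^(k*(m+1)))
  have habs : |s - t| * 2^(k*(m+1)) = |(s - t) * 2^(k*(m+1))| := by
    rw [abs_mul, abs_of_pos hp]
  rw [habs, sub_mul]
  by_cases h2 : ⌊t * 2^(k*(m+1))⌋ < ⌊s * 2^(k*(m+1))⌋
  · have : ((⌊t * 2^(k*(m+1))⌋ + 1 : ℤ) : ℝ) ≤ ⌊s * 2^(k*(m+1))⌋ := by exact_mod_cast h2
    push_cast at this
    refine lt_of_lt_of_le ?_ (le_abs_self _)
    linarith
  · have h3 : ⌊s * 2^(k*(m+1))⌋ + 2 ≤ ⌊t * 2^(k*(m+1))⌋ :=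
      floor_gap hk hs ht (not_lt.1 h2)
    have : ((⌊s * 2^(k*(m+1))⌋ + 2 : ℤ) : ℝ) ≤ ⌊t * 2^(k*(m+1))⌋ := by exact_mod_cast h3
    push_cast at this
    refine lt_of_lt_of_le ?_ (neg_le_abs _)
    linarith

/-- For `n ≥ 1`, `k ≥ 1` and every `x` in the support
`⋃_{m ≥ 1} Ω_m(k)` of `w_k`, one has `M(w_k)(x) ≤ 9^n · w_k(x)`. -/
theorem maximal_wk_pointwise_bound (n k : ℕ) (hn : 1 ≤ n) (hk : 1 ≤ k)
    (x : Fin n → ℝ) (hx : x ∈ ⋃ m : ℕ, Omega n k (m+1)) :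
    MaxFn (wk n k) x ≤ 9^n * wk n k x := by
  obtain ⟨m, hm⟩ := Set.mem_iUnion.1 hx
  rw [wk_eq hn hm]
  unfold MaxFn
  refine iSup_le fun a => iSup_le fun l => iSup_le fun hl => iSup_le fun hxQ => ?_
  have hvol : volume (Cube n a l) = ENNReal.ofReal l ^ n := by
    unfold Cube
    rw [volume_pi_pi]
    simp
  have hQm : MeasurableSet (Cube n a l) := MeasurableSet.univ_pi fun _ => measurableSet_Ico
  have hl0 : ENNReal.ofReal l ^ n ≠ 0 := by
    simp only [ne_eq, pow_eq_zero_iff', ENNReal.ofReal_eq_zero, not_and, not_le]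
    intro h; linarith
  rw [hvol, mul_comm, ← div_eq_mul_inv]
  apply ENNReal.div_le_of_le_mul
  have hp : (0:ℝ) < 2^(k*(m+1)) := by positivity
  by_cases hcase : l * 2^(k*(m+1)) ≤ 1/2
  · calc _ ≤ ∫⁻ y in Cube n a l, lam n k ^ (m+2) := by
          refine setLIntegral_mono' hQm fun y hy => ?_
          refine wk_le hn hk fun j hj => ?_
          by_contra hc
          rw [Omega_eq] at hj hm
          have h1 := hm ⟨0, hn⟩ trivial
          have h2 := (hj ⟨0, hn⟩ trivial).1
          have h3 := sep hk h1 ⟨h2.1, fun b hb hb' => h2.2 b hb (by omega)⟩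
          have h4 := hxQ ⟨0, hn⟩ trivial
          have h5 := hy ⟨0, hn⟩ trivial
          simp only [mem_Ico] at h4 h5
          have h6 : |x ⟨0, hn⟩ - y ⟨0, hn⟩| ≤ l := by
            rw [abs_le]; constructor <;> linarith [h4.1, h4.2, h5.1, h5.2]
          nlinarith
      _ = lam n k * lam n k ^ (m+1) * ENNReal.ofReal l ^ n := by
          rw [setLIntegral_const, hvol]; ring
      _ ≤ _ := by
          gcongr
          refine (lam_le n k hk).trans ?_
          gcongr
          norm_num
  · push Not at hcase
    set T : Fin n → Set ℝ := fun i => Ico ((⌊a i * 2^(k*(m+1))⌋ : ℝ) / 2^(k*(m+1)))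
      ((⌈(a i + l) * 2^(k*(m+1))⌉ : ℝ) / 2^(k*(m+1))) with hT
    have hsub : Cube n a l ⊆ Set.univ.pi T := by
      refine Set.pi_mono fun i _ => Set.Ico_subset_Ico ?_ ?_
      · rw [div_le_iff₀ hp]; exact Int.floor_le _
      · rw [le_div_iff₀ hp]; exact Int.le_ceil _
    calc _ ≤ ∫⁻ y in Set.univ.pi T, wk n k y := lintegral_mono_set hsub
      _ ≤ lam n k ^ (m+1) * volume (Set.univ.pi T) :=
          int_wk_le n k (m+1) hn hk T (fun i => Ico_lev _ _ _) (fun i => measurableSet_Ico)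
      _ ≤ lam n k ^ (m+1) * (9 * ENNReal.ofReal l) ^ n := by
          gcongr
          rw [volume_pi_pi]
          calc _ ≤ ∏ i : Fin n, (9 * ENNReal.ofReal l) := by
                refine Finset.prod_le_prod' fun i _ => ?_
                rw [hT, Real.volume_Ico]
                have : (9:ℝ≥0∞) = ENNReal.ofReal 9 := by simp
                rw [this, ← ENNReal.ofReal_mul (by norm_num)]
                apply ENNReal.ofReal_le_ofReal
                rw [← sub_div, div_le_iff₀ hp]
                have h1 := Int.ceil_lt_add_one ((a i + l) * 2^(k*(m+1)))
                have h2 := Int.lt_floor_add_one (a i * 2^(k*(m+1)))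
                nlinarith
            _ = _ := by simp
      _ = _ := by rw [mul_pow]; ring
end
end

section
/- Fix integers n ≥ 1 and k ≥ 3. For every integer m ≥ 3 and every x ∈ Q_1^m(k), one has T_S(w_k)(x) ≥ (k / (2(2^n − 1))) · w_k(x). -/
open MeasureTheory Set ENNReal

noncomputable section

/-- One-dimensional version of `Omega`. -/
def om (k p : ℕ) : Set ℝ :=
  {t | t ∈ Set.Ico (0:ℝ) 1 ∧ (∀ j, 1 ≤ j → j < p → digit k j t < 2^(k-1)) ∧
      digit k p t = 2^(k-1)}

/-- Prepending a base `2^k` digit `d < L`. -/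
def stp (k L : ℕ) (B : Set ℝ) : Set ℝ :=
  ⋃ d ∈ Finset.range L, {t : ℝ | t * 2^k - d ∈ B}

lemma stp_meas (k L : ℕ) (B : Set ℝ) (hB : MeasurableSet B) : MeasurableSet (stp k L B) := by
  unfold stp
  refine Finset.measurableSet_biUnion _ fun d _ => ?_
  have : Measurable fun t : ℝ => t * 2^k - d := by fun_prop
  exact this hB

lemma stp_vol (k L : ℕ) (B : Set ℝ) (hB : MeasurableSet B) (hB1 : B ⊆ Set.Ico 0 1) :
    volume (stp k L B) = L * ((2:ℝ≥0∞)^k)⁻¹ * volume B := by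
  unfold stp
  rw [measure_biUnion_finset]
  · have h : ∀ d ∈ Finset.range L, volume {t : ℝ | t * 2^k - d ∈ B}
        = ((2:ℝ≥0∞)^k)⁻¹ * volume B := by
      intro d _
      have e : {t : ℝ | t * 2^k - d ∈ B}
          = (fun t : ℝ => t * 2^k) ⁻¹' ((fun t : ℝ => t - d) ⁻¹' B) := rfl
      rw [e, Real.volume_preimage_mul_right (by positivity)]
      simp only [sub_eq_add_neg]
      rw [measure_preimage_add_right]
      congr 1
      rw [abs_of_pos (by positivity), ENNReal.ofReal_inv_of_pos (by positivity),
        ENNReal.ofReal_pow (by norm_num)]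
      simp
    rw [Finset.sum_congr rfl h]
    simp [mul_assoc]
  · intro d _ e _ hde
    refine Set.disjoint_left.2 fun t ht ht' => hde ?_
    have h1 := hB1 ht
    have h2 := hB1 ht'
    simp only [Set.mem_Ico] at h1 h2
    have h3 : (d:ℝ) < e + 1 := by linarith
    have h4 : (e:ℝ) < d + 1 := by linarith
    have h3' : d < e + 1 := by exact_mod_cast h3
    have h4' : e < d + 1 := by exact_mod_cast h4
    omega
  · intro d _
    have : Measurable fun t : ℝ => t * 2^k - d := by fun_prop
    exact this hB

lemma stp_lt (k L : ℕ) (B : Set ℝ) (c : ℝ) (hB : B ⊆ Set.Ico 0 1) (hc : B ⊆ Set.Iio c) (hc1 : c ≤ 1) :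
    stp k L B ⊆ Set.Ico 0 ((L - 1 + c) / 2^k) := by
  intro t ht
  simp only [stp, Set.mem_iUnion, Set.mem_ofPred_eq, Finset.mem_range] at ht
  obtain ⟨d, hd, h⟩ := ht
  have h1 := hB h
  have h2 : t * 2^k - d < c := hc h
  simp only [Set.mem_Ico] at h1
  have hd' : (d:ℝ) + 1 ≤ L := by exact_mod_cast hd
  have hp : (0:ℝ) < 2^k := by positivity
  constructor
  · have : 0 ≤ t * 2^k := by have : (0:ℝ) ≤ d := by positivity
                             linarith
    exact nonneg_of_mul_nonneg_left this hp
  · rw [lt_div_iff₀ hp]; linarith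

lemma stp_om (k L p : ℕ) (hk : 1 ≤ k) (hp : 1 ≤ p) (hL : L ≤ 2^(k-1)) (B : Set ℝ) (hB : B ⊆ om k p) :
    stp k L B ⊆ om k (p+1) := by
  intro t ht
  have hLr : (L:ℝ) ≤ 2^(k-1) := by exact_mod_cast hL
  have h2 : (2:ℝ)^(k-1) ≤ 2^k := pow_le_pow_right₀ (by norm_num) (by omega)
  have hlt := stp_lt k L B 1 (fun s hs => (hB hs).1) (fun s hs => (hB hs).1.2) le_rfl ht
  simp only [stp, Set.mem_iUnion, Set.mem_ofPred_eq, Finset.mem_range] at ht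
  obtain ⟨d, hd, h⟩ := ht
  have hs := hB h
  set s := t * 2^k - d with hsdef
  have hts : t * 2^k = d + s := by rw [hsdef]; ring
  have hdig : ∀ j, 1 ≤ j → digit k (j+1) t = digit k j s := by
    intro j hj
    unfold digit
    have e : t * 2^(k*(j+1)) = s * 2^(k*j) + ((d * 2^(k*j) : ℤ) : ℝ) := by
      push_cast
      rw [mul_add, pow_add, mul_one, mul_comm ((2:ℝ)^(k*j)), ← mul_assoc, hts]; ring
    rw [e, Int.floor_add_intCast]
    obtain ⟨j, rfl⟩ : ∃ j', j = j' + 1 := ⟨j-1, by omega⟩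
    have : (d * 2^(k*(j+1)) : ℤ) = 2^k * (d * 2^(k*j)) := by
      rw [mul_add, pow_add, mul_one]; ring
    rw [this, Int.add_mul_emod_self_left]
  refine ⟨⟨hlt.1, hlt.2.trans_le ?_⟩, ?_, ?_⟩
  · rw [div_le_one (by positivity)]; linarith
  · intro j hj1 hj2
    obtain rfl | hj := Nat.eq_or_lt_of_le hj1
    · have : digit k 1 t = d := by
        unfold digit
        rw [mul_one, hts]
        have : ⌊(d:ℝ) + s⌋ = d := by
          rw [Int.floor_eq_iff]
          have := hs.1
          simp only [Set.mem_Ico] at this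
          push_cast
          constructor <;> linarith
        rw [this]
        apply Int.emod_eq_of_lt (by positivity)
        have : d < 2^k := hd.trans_le (hL.trans (Nat.pow_le_pow_right (by norm_num) (by omega)))
        exact_mod_cast this
      rw [this]
      have : d < 2^(k-1) := hd.trans_le hL
      exact_mod_cast this
    · obtain ⟨j, rfl⟩ : ∃ j', j = j' + 1 := ⟨j-1, by omega⟩
      rw [hdig j (by omega)]
      exact hs.2.1 j (by omega) (by omega)
  · rw [hdig p hp]; exact hs.2.2

lemma base_ex (k : ℕ) (hk : 1 ≤ k) : ∃ B : Set ℝ, MeasurableSet B ∧ B ⊆ om k 1 ∧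
    volume B = ((2:ℝ≥0∞)^k)⁻¹ := by
  refine ⟨Set.Ico (1/2) (1/2 + (2^k)⁻¹), measurableSet_Ico, ?_, ?_⟩
  · intro t ht
    obtain ⟨k, rfl⟩ : ∃ j', k = j' + 1 := ⟨k-1, by omega⟩
    simp only [Set.mem_Ico] at ht
    have hp : (0:ℝ) < 2^k := by positivity
    have h1 : (1:ℝ) ≤ 2^k := one_le_pow₀ (by norm_num)
    have h2 : ((2:ℝ)^(k+1))⁻¹ ≤ 1/2 := by
      rw [pow_succ, mul_inv]
      have := inv_le_one_of_one_le₀ h1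
      linarith
    refine ⟨⟨by linarith, by linarith⟩, fun j _ _ => by omega, ?_⟩
    unfold digit
    have : ⌊t * 2^((k+1)*1)⌋ = 2^k := by
      rw [Int.floor_eq_iff, mul_one]
      push_cast
      have e : (2:ℝ)^(k+1) = 2 * 2^k := by ring
      have hq : (0:ℝ) < 2^(k+1) := by positivity
      constructor
      · rw [e]; nlinarith
      · have := mul_lt_mul_of_pos_right ht.2 hq
        rw [add_mul, inv_mul_cancel₀ hq.ne'] at this
        rw [e] at this ⊢; linarith
    rw [this]
    simp only [Nat.add_sub_cancel]
    apply Int.emod_eq_of_lt (by positivity)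
    exact pow_lt_pow_right₀ (by norm_num) (by omega)
  · rw [Real.volume_Ico, add_sub_cancel_left, ENNReal.ofReal_inv_of_pos (by positivity),
        ENNReal.ofReal_pow (by norm_num)]
    simp

lemma full_ex (k : ℕ) (hk : 1 ≤ k) (q : ℕ) : ∃ B : Set ℝ, MeasurableSet B ∧ B ⊆ om k (q+1) ∧
    volume B = ((2:ℝ≥0∞)^(k-1))^q * (((2:ℝ≥0∞)^k)⁻¹)^(q+1) := by
  induction q with
  | zero => simpa using base_ex k hk
  | succ q ih =>
    obtain ⟨B, hm, hB, hv⟩ := ih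
    refine ⟨stp k (2^(k-1)) B, stp_meas _ _ _ hm, stp_om _ _ _ hk (by omega) le_rfl _ hB, ?_⟩
    rw [stp_vol _ _ _ hm (fun s hs => (hB hs).1), hv]
    push_cast
    ring

lemma zoom_ex (k : ℕ) (hk : 1 ≤ k) (q i M : ℕ) (hi : 1 ≤ i) (hik : i ≤ k) :
    ∃ B : Set ℝ, MeasurableSet B ∧ B ⊆ om k (q+M+2) ∧ B ⊆ Set.Ico 0 ((2^(k*M+i))⁻¹) ∧
    volume B = ((2:ℝ≥0∞)^(k-1))^q * 2^(k-i) * (((2:ℝ≥0∞)^k)⁻¹)^(q+M+2) := by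
  induction M with
  | zero =>
    obtain ⟨B, hm, hB, hv⟩ := full_ex k hk q
    refine ⟨stp k (2^(k-i)) B, stp_meas _ _ _ hm, stp_om _ _ _ hk (by omega)
      (Nat.pow_le_pow_right (by norm_num) (by omega)) _ hB, ?_, ?_⟩
    · have := stp_lt k (2^(k-i)) B 1 (fun s hs => (hB hs).1) (fun s hs => (hB hs).1.2) le_rfl
      refine this.trans (Set.Ico_subset_Ico_right (le_of_eq ?_))
      push_cast
      rw [sub_add_cancel, mul_zero, zero_add, pow_sub₀ _ (by norm_num) hik]
      field_simp
    · rw [stp_vol _ _ _ hm (fun s hs => (hB hs).1), hv]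
      push_cast
      ring
  | succ M ih =>
    obtain ⟨B, hm, hB, hc, hv⟩ := ih
    refine ⟨stp k 1 B, stp_meas _ _ _ hm, stp_om _ _ _ hk (by omega)
      Nat.one_le_two_pow _ hB, ?_, ?_⟩
    · have := stp_lt k 1 B ((2^(k*M+i))⁻¹) (fun s hs => (hB hs).1) (fun s hs => (hc hs).2)
        (inv_le_one_of_one_le₀ (one_le_pow₀ (by norm_num)))
      refine this.trans (Set.Ico_subset_Ico_right (le_of_eq ?_))
      have e : k * (M+1) + i = (k*M+i) + k := by ring
      rw [e, pow_add _ _ k]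
      push_cast
      field_simp
      ring
    · rw [stp_vol _ _ _ hm (fun s hs => (hB hs).1), hv]
      push_cast
      ring

lemma geo (a : ℝ≥0∞) (ha : a ≠ ⊤) : ∑' q : ℕ, (a+1)⁻¹ * (a * (a+1)⁻¹)^q = 1 := by
  have h0 : a + 1 ≠ 0 := by simp
  have ht : a + 1 ≠ ⊤ := by simp [ha]
  rw [ENNReal.tsum_mul_left, ENNReal.tsum_geometric]
  have : 1 - a * (a+1)⁻¹ = (a+1)⁻¹ := by
    have hs : a * (a+1)⁻¹ + (a+1)⁻¹ = 1 := by
      have := ENNReal.mul_inv_cancel h0 ht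
      rwa [add_mul, one_mul] at this
    have hf : a * (a+1)⁻¹ ≠ ⊤ := ENNReal.mul_ne_top ha (by simp)
    exact ENNReal.sub_eq_of_eq_add_rev hf hs.symm
  rw [this]
  exact ENNReal.mul_inv_cancel (by simp [ha]) (by simp)

lemma sCube_eq (n N : ℕ) : sCube n 0 N = Set.univ.pi fun _ : Fin n => Set.Ico (0:ℝ) ((2^N)⁻¹) := by
  simp [sCube, Cube, zpow_neg]

lemma sCube_vol (n N : ℕ) : volume (sCube n 0 N) = (((2:ℝ≥0∞)^N)⁻¹)^n := by
  rw [sCube_eq, volume_pi_pi]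
  simp only [Real.volume_Ico, sub_zero, Finset.prod_const, Finset.card_univ, Fintype.card_fin]
  rw [ENNReal.ofReal_inv_of_pos (by positivity), ENNReal.ofReal_pow (by norm_num)]
  simp

lemma avg_lb (n k M i : ℕ) (hk : 1 ≤ k) (hi : 1 ≤ i) (hik : i ≤ k) :
    ((2:ℝ≥0∞)^(k*n) / ((2:ℝ≥0∞)^((k-1)*n) + 1))^(M+1) ≤
    (volume (sCube n 0 (k*M+i)))⁻¹ * ∫⁻ y in sCube n 0 (k*M+i), wk n k y := by
  set r := (2:ℝ≥0∞)^(k*n) / ((2:ℝ≥0∞)^((k-1)*n) + 1) with hr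
  set a := (2:ℝ≥0∞)^((k-1)*n) with ha
  choose B hm hB hc hv using fun q => zoom_ex k hk q i M hi hik
  have h2 : ∀ j : ℕ, (2:ℝ≥0∞)^j * ((2:ℝ≥0∞)^j)⁻¹ = 1 := fun j =>
    ENNReal.mul_inv_cancel (by positivity) (by simp)
  have hmP : ∀ q, MeasurableSet (Set.univ.pi fun _ : Fin n => B q) := fun q =>
    MeasurableSet.univ_pi fun _ => hm q
  have hpt : ∀ y, ∑' q : ℕ, (Set.univ.pi fun _ : Fin n => B q).indicator
      (fun _ => r^(q+M+2)) y ≤ wk n k y := by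
    intro y
    unfold wk
    rw [← hr]
    have hinj : Function.Injective fun q : ℕ => q + M + 1 := fun a b h => by simpa using h
    refine le_trans (ENNReal.tsum_le_tsum fun q => ?_)
      (ENNReal.tsum_comp_le_tsum_of_injective hinj _)
    show _ ≤ (Omega n k (q+M+1+1)).indicator (fun _ => r^(q+M+1+1)) y
    apply Set.indicator_le_indicator_of_subset
    · intro z hz
      have hz' := fun i => hB q (hz i (Set.mem_univ i))
      exact ⟨fun i => (hz' i).1, fun i => (hz' i).2⟩
    · intro _; exact zero_le
  have hint : ∑' q : ℕ, r^(q+M+2) * (((2:ℝ≥0∞)^(k-1))^q * 2^(k-i) * (((2:ℝ≥0∞)^k)⁻¹)^(q+M+2))^n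
      ≤ ∫⁻ y in sCube n 0 (k*M+i), wk n k y := by
    refine le_trans (le_of_eq ?_) (lintegral_mono hpt)
    rw [lintegral_tsum fun q => (measurable_const.indicator (hmP q)).aemeasurable]
    refine tsum_congr fun q => ?_
    rw [lintegral_indicator_const (hmP q), Measure.restrict_apply (hmP q),
      Set.inter_eq_left.2, volume_pi_pi]
    · simp [hv]
    · rw [sCube_eq]
      exact Set.pi_mono fun _ _ => hc q
  have hterm : ∀ q : ℕ, r^(q+M+2) * (((2:ℝ≥0∞)^(k-1))^q * 2^(k-i) * (((2:ℝ≥0∞)^k)⁻¹)^(q+M+2))^n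
      = ((a+1)⁻¹)^(M+1) * (2^(k-i))^n * ((a+1)⁻¹ * (a * (a+1)⁻¹)^q) := by
    intro q
    have e1 : r^(q+M+2) * ((((2:ℝ≥0∞)^k)⁻¹)^(q+M+2))^n = ((a+1)⁻¹)^(q+M+2) := by
      rw [← pow_mul, mul_comm (q+M+2) n, pow_mul, ← mul_pow, hr, div_eq_mul_inv]
      congr 1
      have := h2 k
      rw [pow_mul, mul_right_comm, ← mul_pow, this, one_pow, one_mul]
    have e2 : (((2:ℝ≥0∞)^(k-1))^q)^n = a^q := by
      rw [ha, ← pow_mul, ← pow_mul, ← pow_mul]; ring_nf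
    calc _ = (r^(q+M+2) * ((((2:ℝ≥0∞)^k)⁻¹)^(q+M+2))^n) * (((2:ℝ≥0∞)^(k-1))^q)^n * (2^(k-i))^n := by
            rw [mul_pow, mul_pow]; ring
      _ = _ := by rw [e1, e2]; ring
  rw [tsum_congr hterm, ENNReal.tsum_mul_left, geo a (by simp [ha]), mul_one] at hint
  refine le_trans (le_of_eq ?_) (mul_le_mul_right hint _)
  rw [sCube_vol, ← ENNReal.inv_pow, inv_inv, hr, div_eq_mul_inv, mul_pow, mul_left_comm]
  rw [mul_comm]
  congr 1
  rw [← mul_pow, ← pow_add, ← pow_mul, ← pow_mul]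
  congr 1
  have : k * M + i + (k - i) = k * M + k := by omega
  rw [this]; ring

lemma wk_le_s4 (n k : ℕ) (hn : 1 ≤ n) (hk : 1 ≤ k) (M : ℕ) (x : Fin n → ℝ)
    (hx : ∀ i, x i * 2^(k*(M+1)) ∈ Set.Ico ((2:ℝ)^(k-1)) (2^(k-1)+1)) :
    wk n k x ≤ ((2:ℝ≥0∞)^(k*n) / ((2:ℝ≥0∞)^((k-1)*n) + 1))^(M+1) := by
  unfold wk
  rw [tsum_eq_single M]
  · exact Set.indicator_le_self _ _ _
  · intro p hp
    refine Set.indicator_of_notMem (fun h => ?_) _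
    have i0 : Fin n := ⟨0, hn⟩
    have h1 := hx i0
    have h2 := h.2 i0
    simp only [Set.mem_Ico] at h1
    have h0 := (h.1 i0).1
    have hpos : (0:ℤ) < 2^(k-1) := by positivity
    have hlt : (2:ℤ)^(k-1) < 2^k := pow_lt_pow_right₀ (by norm_num) (by omega)
    rcases lt_or_gt_of_ne hp with hp | hp
    · have : digit k (p+1) (x i0) = 0 := by
        unfold digit
        have : ⌊x i0 * 2^(k*(p+1))⌋ = 0 := by
          rw [Int.floor_eq_zero_iff]
          refine ⟨by positivity, ?_⟩
          obtain ⟨d, rfl⟩ : ∃ d, M = p + 1 + d := ⟨M - (p+1), by omega⟩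
          have e : k * (p+1+d+1) = k*(p+1) + k + k * d := by ring
          rw [e, pow_add, pow_add] at h1
          have hd : (1:ℝ) ≤ 2^(k*d) := one_le_pow₀ (by norm_num)
          have hkk : (2:ℝ)^k = 2 * 2^(k-1) := by
            rw [← pow_succ']; congr 1; omega
          have h1k : (1:ℝ) ≤ 2^(k-1) := one_le_pow₀ (by norm_num)
          by_contra! hc
          have h3 : (2:ℝ)^k ≤ x i0 * 2^(k*(p+1)) * 2^k * 2^(k*d) := by
            have h4 : (2:ℝ)^k ≤ x i0 * 2^(k*(p+1)) * 2^k := by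
              nlinarith [show (0:ℝ) < 2^k by positivity]
            nlinarith [show (0:ℝ) < 2^k by positivity]
          have h5 : x i0 * (2^(k*(p+1)) * 2^k * 2^(k*d)) = x i0 * 2^(k*(p+1)) * 2^k * 2^(k*d) := by ring
          linarith [h1.2]
        rw [this]; simp
      rw [h2.2] at this
      omega
    · have h3 := h2.1 (M+1) (by omega) (by omega)
      have : digit k (M+1) (x i0) = 2^(k-1) := by
        unfold digit
        have : ⌊x i0 * 2^(k*(M+1))⌋ = 2^(k-1) := by
          rw [Int.floor_eq_iff]
          push_cast
          exact h1
        rw [this]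
        exact Int.emod_eq_of_lt hpos.le hlt
      omega

/-- For `n ≥ 1`, `k ≥ 3`, every `m ≥ 3` and every `x ∈ Q_1^m(k)`,
one has `T_S(w_k)(x) ≥ (k / (2(2^n - 1))) · w_k(x)`. -/
theorem sparse_wk_pointwise_lower_bound (n k : ℕ) (hn : 1 ≤ n) (hk : 3 ≤ k)
    (m : ℕ) (hm : 3 ≤ m) (x : Fin n → ℝ) (hx : x ∈ Q1 n k m) :
    (k : ℝ≥0∞) / (2 * ((2:ℝ≥0∞)^n - 1)) * wk n k x ≤ TS (wk n k) x := by
  obtain ⟨M, rfl⟩ : ∃ M, m = M + 2 := ⟨m - 2, by omega⟩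
  have hp : (0:ℝ) < 2^(k*(M+2)) := by positivity
  have hkk : (2:ℝ)^k = 2^(k-1) * 2 := by
    rw [← pow_succ]; congr 1; omega
  have hq : (2:ℝ)^(k*(M+2)) = 2^(k*(M+1)) * 2^k := by
    rw [← pow_add]; congr 1
  have hx' : ∀ i, x i * 2^(k*(M+1+1)) ∈ Set.Ico ((2:ℝ)^(k-1)) (2^(k-1)+1) := by
    intro i
    have h := hx i (Set.mem_univ i)
    have e1 : (2:ℝ)^(-((k:ℤ)*(((M+2:ℕ):ℤ)-1)) - 1) = 2^(k-1) * (2^(k*(M+2)))⁻¹ := by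
      have : (-((k:ℤ)*(((M+2:ℕ):ℤ)-1)) - 1) = -((k*(M+1)+1 : ℕ):ℤ) := by push_cast; ring
      rw [this, zpow_neg, zpow_natCast, hq, hkk, pow_succ]
      field_simp
    have e2 : (2:ℝ)^(-((k:ℤ)*((M+2:ℕ):ℤ))) = (2^(k*(M+2)))⁻¹ := by
      have : (-((k:ℤ)*((M+2:ℕ):ℤ))) = -((k*(M+2) : ℕ):ℤ) := by push_cast; ring
      rw [this, zpow_neg, zpow_natCast]
    simp only [e1, e2, Set.mem_Ico] at h
    show _ ≤ x i * 2^(k*(M+2)) ∧ x i * 2^(k*(M+2)) < _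
    have c := inv_mul_cancel₀ hp.ne'
    constructor
    · have := mul_le_mul_of_nonneg_right h.1 hp.le
      rwa [mul_assoc, c, mul_one] at this
    · have := mul_lt_mul_of_pos_right h.2 hp
      rwa [add_mul, mul_assoc, c, mul_one] at this
  have hw := wk_le_s4 n k hn (by omega) (M+1) x hx'
  set r := (2:ℝ≥0∞)^(k*n) / ((2:ℝ≥0∞)^((k-1)*n) + 1) with hr
  have hmem : ∀ N, N ≤ k*(M+1) → x ∈ sCube n 0 N := by
    intro N hN
    rw [sCube_eq]
    intro i _
    have h := hx' i
    simp only [Set.mem_Ico] at h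
    have h1 : (1:ℝ) ≤ 2^(k-1) := one_le_pow₀ (by norm_num)
    have h2 : (2:ℝ)^N ≤ 2^(k*(M+1)) := pow_le_pow_right₀ (by norm_num) hN
    have h3 : k*(M+1+1) = k*(M+1) + k := by ring
    rw [h3, pow_add, ← mul_assoc] at h
    have hk0 : (0:ℝ) < 2^k := by positivity
    have h4 : 0 ≤ x i := by
      have : 0 ≤ x i * 2^(k*(M+1)) * 2^k := by linarith [h.1]
      exact nonneg_of_mul_nonneg_left (nonneg_of_mul_nonneg_left this hk0) (by positivity)
    refine ⟨h4, ?_⟩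
    rcases eq_or_lt_of_le h1 with h1 | h1
    · exfalso
      have : (1:ℝ) < 2^(k-1) := one_lt_pow₀ (by norm_num) (by omega)
      linarith
    have h5 : x i * 2^(k*(M+1)) < 1 := by
      have : x i * 2^(k*(M+1)) * 2^k < 1 * 2^k := by rw [one_mul]; linarith [h.2]
      exact lt_of_mul_lt_mul_right this hk0.le
    rw [← one_div, lt_div_iff₀ (by positivity)]
    exact lt_of_le_of_lt (mul_le_mul_of_nonneg_left h2 h4) h5
  have hTS : (k:ℝ≥0∞) * r^(M+1) ≤ TS (wk n k) x := by
    unfold TS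
    let f : ℕ ↪ ℕ × ℕ := ⟨fun i => (0, k*M+(i+1)), fun a b h => by simpa using h⟩
    refine le_trans ?_ (ENNReal.sum_le_tsum ((Finset.range k).map f))
    rw [Finset.sum_map]
    have : (k:ℝ≥0∞) * r^(M+1) = ∑ i ∈ Finset.range k, r^(M+1) := by simp
    rw [this]
    refine Finset.sum_le_sum fun i hi => ?_
    have hi' := Finset.mem_range.1 hi
    show _ ≤ (sCube n 0 (k*M+(i+1))).indicator _ x
    rw [Set.indicator_of_mem (hmem _ (by rw [mul_add]; omega))]
    exact avg_lb n k M (i+1) (by omega) (by omega) (by omega)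
  have hle : r ≤ 2 * ((2:ℝ≥0∞)^n - 1) := by
    have h1 : r ≤ 2^n := by
      rw [hr]
      refine ENNReal.div_le_of_le_mul ?_
      have : k * n = n + (k-1)*n := by
        obtain ⟨k, rfl⟩ : ∃ j', k = j' + 1 := ⟨k-1, by omega⟩
        simp only [Nat.add_sub_cancel]; ring
      rw [this, pow_add]
      exact mul_le_mul_right le_self_add _
    refine h1.trans ?_
    obtain ⟨n, rfl⟩ : ∃ j', n = j' + 1 := ⟨n-1, by omega⟩
    have h2 : (1:ℝ≥0∞) ≤ 2^n := one_le_pow₀ (by norm_num)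
    have h3 : (2:ℝ≥0∞)^n ≤ 2^(n+1) - 1 := by
      refine ENNReal.le_sub_of_add_le_right (by simp) ?_
      rw [pow_succ, mul_two]
      gcongr
    rw [pow_succ', ← pow_succ']
    rw [pow_succ']
    rw [pow_succ'] at h3
    gcongr
  refine le_trans ?_ hTS
  have hc : (k:ℝ≥0∞) / (2 * ((2:ℝ≥0∞)^n - 1)) * wk n k x
      ≤ (k:ℝ≥0∞) / (2 * ((2:ℝ≥0∞)^n - 1)) * (r^(M+1) * (2 * ((2:ℝ≥0∞)^n - 1))) := by
    refine mul_le_mul_right (hw.trans ?_) _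
    rw [pow_succ]
    exact mul_le_mul_right hle _
  refine hc.trans ?_
  rw [mul_left_comm, mul_comm]
  refine mul_le_mul_left ?_ _
  rw [div_eq_mul_inv, mul_assoc]
  exact mul_le_of_le_one_right' (ENNReal.inv_mul_le_one _)
end
end

section
/- Fix an integer n ≥ 1. There exist constants 0 < c ≤ C < ∞ depending only on n such that c · w(x) ≤ M(w)(x) ≤ C · w(x) for almost every x ∈ supp(w). -/
open MeasureTheory Set ENNReal

noncomputable section

/-- Corner coordinate of the translated cube `2⃗^k + Q_1^m(k)`. -/
def pcor (k m : ℕ) : ℝ := 2^k / 2 * ((2^k)⁻¹)^m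

/-- The translated cube `2⃗^k + Q_1^m(k)`. -/
def Pc (n k m : ℕ) : Set (Fin n → ℝ) := Cube n (fun _ => 2^k + pcor k m) (((2:ℝ)^k)⁻¹^m)

/-- The value of the weight on `Pc n k m`. -/
def Vc (n k m : ℕ) : ℝ≥0∞ := Ak n k * ((2:ℝ≥0∞)^(k*n) / ((2:ℝ≥0∞)^((k-1)*n) + 1))^m

lemma mem_Cube_const {n : ℕ} {c l : ℝ} {x : Fin n → ℝ} :
    x ∈ Cube n (fun _ => c) l ↔ ∀ i, c ≤ x i ∧ x i < c + l := by
  simp [Cube, Set.mem_pi]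

lemma Q1_eq (n k m : ℕ) :
    Q1 n k m = Cube n (fun _ => pcor k m) (((2:ℝ)^k)⁻¹^m) := by
  have h1 : (2:ℝ)^(-(k*(m-1) : ℤ) - 1) = pcor k m := by
    have : (-(k*(m-1) : ℤ) - 1) = (k:ℤ) - 1 + (-(k:ℤ)) * (m:ℤ) := by ring
    rw [this, zpow_add₀ (by norm_num), zpow_sub₀ (by norm_num), zpow_mul]
    simp [pcor]
  have h2 : (2:ℝ)^(-(k*m : ℤ)) = (((2:ℝ)^k)⁻¹^m) := by
    have : (-(k*m : ℤ)) = (-(k:ℤ)) * (m:ℤ) := by ring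
    rw [this, zpow_mul]
    simp
  rw [Q1, h1, h2]

lemma mem_Pc {n k m : ℕ} {x : Fin n → ℝ} :
    x ∈ Pc n k m ↔ (fun i => x i - (2:ℝ)^k) ∈ Q1 n k m := by
  rw [Q1_eq, Pc, mem_Cube_const, mem_Cube_const]
  refine forall_congr' fun i => ?_
  constructor <;> rintro ⟨h1, h2⟩ <;> constructor <;> linarith

lemma digit_lt {k m j : ℕ} {t : ℝ} (hk : 3 ≤ k) (hjm : j < m)
    (h1 : pcor k m ≤ t) (h2 : t < pcor k m + ((2:ℝ)^k)⁻¹^m) : digit k j t = 0 := by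
  have hb : (8:ℝ) ≤ 2^k := by
    calc (8:ℝ) = 2^3 := by norm_num
      _ ≤ 2^k := pow_le_pow_right₀ (by norm_num) hk
  have hq : 0 < ((2:ℝ)^k)⁻¹^m := by positivity
  have ht : 0 ≤ t := le_trans (by unfold pcor; positivity) h1
  have hs : ((2:ℝ)^k)⁻¹^m ≤ ((2:ℝ)^k)⁻¹^(j+1) :=
    pow_le_pow_of_le_one (by positivity) (inv_le_one_of_one_le₀ (by linarith)) hjm
  have h3 : t * 2^(k*j) < 1 := by
    have e : ((2:ℝ)^k)⁻¹^(j+1) * 2^(k*j) = ((2:ℝ)^k)⁻¹ := by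
      rw [pow_mul, pow_succ, inv_pow]; field_simp
    have : t < (2^k/2+1) * ((2:ℝ)^k)⁻¹^(j+1) := by
      unfold pcor at h2
      nlinarith
    have h5 : t * 2^(k*j) < ((2^k/2+1) * ((2:ℝ)^k)⁻¹^(j+1)) * 2^(k*j) :=
      mul_lt_mul_of_pos_right this (by positivity)
    rw [mul_assoc, e] at h5
    refine h5.trans_le ?_
    rw [← div_eq_mul_inv, div_le_one (by positivity)]
    linarith
  have : ⌊t * 2^(k*j)⌋ = 0 := by
    rw [Int.floor_eq_zero_iff]
    exact ⟨by positivity, h3⟩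
  simp [digit, this]

lemma digit_self {k m : ℕ} {t : ℝ} (hk : 3 ≤ k)
    (h1 : pcor k m ≤ t) (h2 : t < pcor k m + ((2:ℝ)^k)⁻¹^m) : digit k m t = 2^(k-1) := by
  have e0 : (2:ℝ)^k/2 = 2^(k-1) := by
    obtain ⟨k, rfl⟩ : ∃ j, k = j+1 := ⟨k-1, by omega⟩
    simp [pow_succ]
  have e : ((2:ℝ)^k)⁻¹^m * 2^(k*m) = 1 := by
    rw [pow_mul, inv_pow]; field_simp
  have : ⌊t * 2^(k*m)⌋ = 2^(k-1) := by
    rw [Int.floor_eq_iff]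
    push_cast
    have hp : (0:ℝ) < 2^(k*m) := by positivity
    unfold pcor at h1 h2
    rw [e0] at h1 h2
    constructor
    · have := mul_le_mul_of_nonneg_right h1 hp.le
      rwa [mul_assoc, e, mul_one] at this
    · have := mul_lt_mul_of_pos_right h2 hp
      rwa [add_mul, mul_assoc, e, mul_one] at this
  rw [digit, this]
  apply Int.emod_eq_of_lt (by positivity)
  exact pow_lt_pow_right₀ (by norm_num) (by omega)

lemma mem_Omega_iff {n k m m' : ℕ} (hn : 1 ≤ n) (hk : 3 ≤ k) (hm : 1 ≤ m) (hm' : 1 ≤ m')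
    {z : Fin n → ℝ} (hz : z ∈ Q1 n k m) : z ∈ Omega n k m' ↔ m' = m := by
  rw [Q1_eq, mem_Cube_const] at hz
  have hb : (8:ℝ) ≤ 2^k := by
    calc (8:ℝ) = 2^3 := by norm_num
      _ ≤ 2^k := pow_le_pow_right₀ (by norm_num) hk
  constructor
  · rintro ⟨-, h⟩
    obtain ⟨ha, hb⟩ := h ⟨0, hn⟩
    obtain ⟨h1, h2⟩ := hz ⟨0, hn⟩
    rcases lt_trichotomy m' m with hlt | heq | hgt
    · rw [digit_lt hk hlt h1 h2] at hb
      have : (0:ℤ) < 2^(k-1) := by positivity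
      omega
    · exact heq
    · have := ha m hm hgt
      rw [digit_self hk h1 h2] at this
      omega
  · rintro rfl
    refine ⟨fun i => ?_, fun i => ⟨fun j _ hj => ?_, digit_self hk (hz i).1 (hz i).2⟩⟩
    · have hs : ((2:ℝ)^k)⁻¹^m' ≤ ((2:ℝ)^k)⁻¹^1 :=
        pow_le_pow_of_le_one (by positivity) (inv_le_one_of_one_le₀ (by linarith)) hm
      have hq : 0 < ((2:ℝ)^k)⁻¹^m' := by positivity
      obtain ⟨h1, h2⟩ := hz i
      refine ⟨le_trans (by unfold pcor; positivity) h1, ?_⟩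
      unfold pcor at h2
      have h5 : (2^k/2+1) * ((2:ℝ)^k)⁻¹^m' ≤ (2^k/2+1) * ((2:ℝ)^k)⁻¹ :=
        mul_le_mul_of_nonneg_left (by simpa using hs) (by positivity)
      have h6 : (2^k/2+1) * ((2:ℝ)^k)⁻¹ ≤ 1 := by
        rw [← div_eq_mul_inv, div_le_one (by positivity)]
        linarith
      linarith
    · rw [digit_lt hk hj (hz i).1 (hz i).2]
      positivity

lemma Q1_inj {n k m m' : ℕ} (hn : 1 ≤ n) (hk : 3 ≤ k) (hm : 1 ≤ m) (hm' : 1 ≤ m')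
    {z : Fin n → ℝ} (hz : z ∈ Q1 n k m) (hz' : z ∈ Q1 n k m') : m' = m :=
  (mem_Omega_iff hn hk hm hm' hz).1 ((mem_Omega_iff hn hk hm' hm' hz').2 rfl)

lemma wk_eq_s5 {n k m : ℕ} (hn : 1 ≤ n) (hk : 3 ≤ k) (hm : 1 ≤ m)
    {z : Fin n → ℝ} (hz : z ∈ Q1 n k m) :
    wk n k z = ((2:ℝ≥0∞)^(k*n) / ((2:ℝ≥0∞)^((k-1)*n) + 1))^m := by
  unfold wk
  rw [tsum_eq_single (m-1)]
  · rw [Nat.sub_add_cancel hm, Set.indicator_of_mem ((mem_Omega_iff hn hk hm hm hz).2 rfl)]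
  · intro j hj
    refine Set.indicator_of_notMem (fun h => hj ?_) _
    have := (mem_Omega_iff hn hk hm (by omega) hz).1 h
    omega

lemma bigW_eq {n : ℕ} (hn : 1 ≤ n) (x : Fin n → ℝ) :
    bigW n x = ∑' k : ℕ, ∑' m : ℕ,
      (Pc n (k+3) (m+3)).indicator (fun _ => Vc n (k+3) (m+3)) x := by
  unfold bigW
  refine tsum_congr fun k => ?_
  by_cases h : (fun i => x i - (2:ℝ)^(k+3)) ∈ Gamma n (k+3)
  · rw [Set.indicator_of_mem h]
    obtain ⟨m, hm⟩ := Set.mem_iUnion.1 h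
    rw [wk_eq_s5 hn (by omega) (by omega) hm, tsum_eq_single m]
    · rw [Set.indicator_of_mem (mem_Pc.2 hm)]; rfl
    · intro j hj
      refine Set.indicator_of_notMem (fun h => hj ?_) _
      have := Q1_inj hn (by omega) (by omega) (by omega) hm (mem_Pc.1 h)
      omega
  · rw [Set.indicator_of_notMem h]
    symm
    rw [ENNReal.tsum_eq_zero]
    intro m
    exact Set.indicator_of_notMem (fun h' => h (Set.mem_iUnion.2 ⟨m, mem_Pc.1 h'⟩)) _

/-- Coordinates of points of `Pc`. -/
lemma Pc_bounds {n k m : ℕ} (hk : 3 ≤ k) (hm : 1 ≤ m) {x : Fin n → ℝ} (hx : x ∈ Pc n k m)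
    (i : Fin n) : (2:ℝ)^k ≤ x i ∧ x i < 2^k + 1 := by
  have hb : (8:ℝ) ≤ 2^k := by
    calc (8:ℝ) = 2^3 := by norm_num
      _ ≤ 2^k := pow_le_pow_right₀ (by norm_num) hk
  obtain ⟨h1, h2⟩ := mem_Cube_const.1 hx i
  have hs : ((2:ℝ)^k)⁻¹^m ≤ ((2:ℝ)^k)⁻¹^1 :=
    pow_le_pow_of_le_one (by positivity) (inv_le_one_of_one_le₀ (by linarith)) hm
  have hq : 0 < ((2:ℝ)^k)⁻¹^m := by positivity
  have h0 : 0 ≤ pcor k m := by unfold pcor; positivity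
  refine ⟨by linarith, ?_⟩
  unfold pcor at h2
  have h5 : (2^k/2+1) * ((2:ℝ)^k)⁻¹^m ≤ (2^k/2+1) * ((2:ℝ)^k)⁻¹ :=
    mul_le_mul_of_nonneg_left (by simpa using hs) (by positivity)
  have h6 : (2^k/2+1) * ((2:ℝ)^k)⁻¹ ≤ 1 := by
    rw [← div_eq_mul_inv, div_le_one (by positivity)]
    linarith
  linarith

lemma Cube_sep {n : ℕ} {a : Fin n → ℝ} {l : ℝ} {x y : Fin n → ℝ}
    (hx : x ∈ Cube n a l) (hy : y ∈ Cube n a l) (i : Fin n) : x i - y i < l := by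
  have h1 := hx i (Set.mem_univ i)
  have h2 := hy i (Set.mem_univ i)
  simp only [Set.mem_Ico] at h1 h2
  linarith

lemma sep_same {n k m m' : ℕ} (hn : 1 ≤ n) (hk : 3 ≤ k) (hmm : m < m')
    {a : Fin n → ℝ} {l : ℝ} {x y : Fin n → ℝ}
    (hx : x ∈ Cube n a l) (hy : y ∈ Cube n a l) (hxP : x ∈ Pc n k m) (hyP : y ∈ Pc n k m') :
    2^k * ((2:ℝ)^k)⁻¹^m ≤ 4 * l := by
  have hb : (8:ℝ) ≤ 2^k := by
    calc (8:ℝ) = 2^3 := by norm_num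
      _ ≤ 2^k := pow_le_pow_right₀ (by norm_num) hk
  have h0 := Cube_sep hx hy ⟨0, hn⟩
  obtain ⟨h1, -⟩ := mem_Cube_const.1 hxP ⟨0, hn⟩
  obtain ⟨-, h2⟩ := mem_Cube_const.1 hyP ⟨0, hn⟩
  have hs : ((2:ℝ)^k)⁻¹^m' ≤ ((2:ℝ)^k)⁻¹^(m+1) :=
    pow_le_pow_of_le_one (by positivity) (inv_le_one_of_one_le₀ (by linarith)) hmm
  have hq : 0 < ((2:ℝ)^k)⁻¹^m := by positivity
  have h5 : (2^k/2+1) * ((2:ℝ)^k)⁻¹^m' ≤ (2^k/2+1) * ((2:ℝ)^k)⁻¹^(m+1) :=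
    mul_le_mul_of_nonneg_left hs (by positivity)
  have h6 : (2^k/2+1) * ((2:ℝ)^k)⁻¹ ≤ 1 := by
    rw [← div_eq_mul_inv, div_le_one (by positivity)]
    linarith
  rw [pow_succ, mul_comm (_ ^ m), ← mul_assoc] at h5
  unfold pcor at h1 h2
  nlinarith

lemma sep_diff {n k k' m m' : ℕ} (hn : 1 ≤ n) (hk : 3 ≤ k) (hk' : 3 ≤ k') (hkk : k ≠ k')
    (hm : 1 ≤ m) (hm' : 1 ≤ m')
    {a : Fin n → ℝ} {l : ℝ} {x y : Fin n → ℝ}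
    (hx : x ∈ Cube n a l) (hy : y ∈ Cube n a l) (hxP : x ∈ Pc n k m) (hyP : y ∈ Pc n k' m') :
    (2:ℝ)^k' ≤ 4 * l := by
  have hb : (8:ℝ) ≤ 2^k := by
    calc (8:ℝ) = 2^3 := by norm_num
      _ ≤ 2^k := pow_le_pow_right₀ (by norm_num) hk
  have hb' : (8:ℝ) ≤ 2^k' := by
    calc (8:ℝ) = 2^3 := by norm_num
      _ ≤ 2^k' := pow_le_pow_right₀ (by norm_num) hk'
  obtain ⟨h1, h2⟩ := Pc_bounds hk hm hxP ⟨0, hn⟩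
  obtain ⟨h3, h4⟩ := Pc_bounds hk' hm' hyP ⟨0, hn⟩
  have h5 := Cube_sep hx hy ⟨0, hn⟩
  have h6 := Cube_sep hy hx ⟨0, hn⟩
  rcases lt_or_gt_of_ne hkk with h | h
  · have : (2:ℝ)^(k+1) ≤ 2^k' := pow_le_pow_right₀ (by norm_num) h
    rw [pow_succ] at this
    linarith
  · have : (2:ℝ)^(k'+1) ≤ 2^k := pow_le_pow_right₀ (by norm_num) h
    rw [pow_succ] at this
    linarith

lemma volume_Pc (n k m : ℕ) : volume (Pc n k m) = (((2:ℝ≥0∞)^(k*n))⁻¹)^m := by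
  rw [Pc, volume_Cube, ENNReal.ofReal_pow (by positivity), ENNReal.ofReal_inv_of_pos (by positivity),
    ENNReal.ofReal_pow (by norm_num), ← pow_mul, mul_comm m n, pow_mul, ← ENNReal.inv_pow, ← pow_mul]
  simp

lemma mass_Pc (n k m : ℕ) : Vc n k m * volume (Pc n k m)
    = Ak n k * (((2:ℝ≥0∞)^((k-1)*n) + 1)⁻¹)^m := by
  rw [volume_Pc, Vc, mul_assoc, ← mul_pow, div_eq_mul_inv, mul_right_comm,
    ENNReal.mul_inv_cancel (by positivity) (by finiteness), one_mul]

lemma one_le_ratio (n k : ℕ) (hn : 1 ≤ n) (hk : 3 ≤ k) :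
    1 ≤ (2:ℝ≥0∞)^(k*n) / ((2:ℝ≥0∞)^((k-1)*n) + 1) := by
  rw [ENNReal.le_div_iff_mul_le (by simp) (by left; finiteness), one_mul]
  have h : (2:ℕ)^((k-1)*n) + 1 ≤ 2^(k*n) := by
    obtain ⟨k, rfl⟩ : ∃ j, k = j+1 := ⟨k-1, by omega⟩
    have : (k+1)*n = k*n + n := by ring
    rw [this, pow_add, Nat.add_sub_cancel]
    have h1 : 1 ≤ 2^(k*n) := Nat.one_le_two_pow
    have h2 : 2^1 ≤ 2^n := Nat.pow_le_pow_right (by norm_num) hn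
    nlinarith
  exact_mod_cast h

lemma one_le_Ak (n k : ℕ) : 1 ≤ Ak n k := by
  have h : 1 ≤ (2:ℕ)^((k-1)*n) * (2^((k-1)*n) + 1)^2 := Nat.one_le_iff_ne_zero.2 (by positivity)
  unfold Ak
  exact_mod_cast h

lemma one_le_Vc (n k m : ℕ) (hn : 1 ≤ n) (hk : 3 ≤ k) : 1 ≤ Vc n k m := by
  unfold Vc
  exact one_le_mul (one_le_Ak n k) (one_le_pow_of_one_le' (one_le_ratio n k hn hk) m)

/-- Geometric tail of the masses of one block. -/
lemma tail_mass (n k m : ℕ) :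
    ∑' j : ℕ, Ak n k * (((2:ℝ≥0∞)^((k-1)*n) + 1)⁻¹)^(j+m)
      ≤ 2 * (Ak n k * (((2:ℝ≥0∞)^((k-1)*n) + 1)⁻¹)^m) := by
  have h : ((2:ℝ≥0∞)^((k-1)*n) + 1)⁻¹ ≤ 2⁻¹ := by
    apply ENNReal.inv_le_inv.2
    have : (1:ℝ≥0∞) ≤ 2^((k-1)*n) := one_le_pow_of_one_le' (by norm_num) _
    calc (2:ℝ≥0∞) = 1 + 1 := by norm_num
      _ ≤ _ := by gcongr
  calc ∑' j : ℕ, Ak n k * (((2:ℝ≥0∞)^((k-1)*n) + 1)⁻¹)^(j+m)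
      ≤ ∑' j : ℕ, (2⁻¹:ℝ≥0∞)^j * (Ak n k * (((2:ℝ≥0∞)^((k-1)*n) + 1)⁻¹)^m) := by
        refine ENNReal.tsum_le_tsum fun j => ?_
        rw [pow_add, mul_left_comm]
        gcongr
    _ = _ := by
        rw [ENNReal.tsum_mul_right, ENNReal.tsum_geometric, ENNReal.one_sub_inv_two, inv_inv]

lemma block_mass (n k : ℕ) : ∑' j : ℕ, Vc n k (j+3) * volume (Pc n k (j+3)) ≤ 2 := by
  simp_rw [mass_Pc]
  refine (tail_mass n k 3).trans ?_
  have : Ak n k * (((2:ℝ≥0∞)^((k-1)*n) + 1)⁻¹)^3 ≤ 1 := by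
    rw [← ENNReal.inv_pow, ← div_eq_mul_inv]
    apply ENNReal.div_le_of_le_mul
    rw [one_mul, Ak, pow_succ' _ 2]
    gcongr
    exact le_self_add
  calc _ ≤ (2:ℝ≥0∞) * 1 := by gcongr
    _ = 2 := by norm_num

/-- The contribution of one cube to the integral over `Q`. -/
def Ic (n : ℕ) (Q : Set (Fin n → ℝ)) (k m : ℕ) : ℝ≥0∞ :=
  ∫⁻ y in Q, (Pc n k m).indicator (fun _ => Vc n k m) y

lemma Ic_eq (n : ℕ) (Q : Set (Fin n → ℝ)) (k m : ℕ) :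
    Ic n Q k m = Vc n k m * volume (Pc n k m ∩ Q) := by
  have hP : MeasurableSet (Pc n k m) := measurableSet_Cube _ _ _
  rw [Ic, lintegral_indicator_const hP, Measure.restrict_apply hP]

lemma Ic_le (n : ℕ) (Q : Set (Fin n → ℝ)) (k m : ℕ) :
    Ic n Q k m ≤ Vc n k m * volume (Pc n k m) := by
  rw [Ic_eq]; gcongr; exact inter_subset_left

lemma Ic_le' (n : ℕ) (Q : Set (Fin n → ℝ)) (k m : ℕ) :
    Ic n Q k m ≤ Vc n k m * volume Q := by
  rw [Ic_eq]; gcongr; exact inter_subset_right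

lemma Ic_zero (n : ℕ) (Q : Set (Fin n → ℝ)) (k m : ℕ) (h : ¬ (Pc n k m ∩ Q).Nonempty) :
    Ic n Q k m = 0 := by
  rw [Ic_eq, Set.not_nonempty_iff_eq_empty.1 h]; simp

lemma lintegral_bigW {n : ℕ} (hn : 1 ≤ n) (Q : Set (Fin n → ℝ)) :
    ∫⁻ y in Q, bigW n y = ∑' k : ℕ, ∑' m : ℕ, Ic n Q (k+3) (m+3) := by
  simp_rw [bigW_eq hn]
  have hmeas : ∀ k m : ℕ, Measurable
      (fun y => (Pc n (k+3) (m+3)).indicator (fun _ => Vc n (k+3) (m+3)) y) := fun k m =>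
    measurable_const.indicator (measurableSet_Cube _ _ _)
  rw [lintegral_tsum (fun k => (Measurable.tsum (hmeas k)).aemeasurable)]
  refine tsum_congr fun k => ?_
  rw [lintegral_tsum (fun m => (hmeas k m).aemeasurable)]
  rfl

/-- Blocks other than that of `x`. -/
lemma other_block {n k k' m : ℕ} (hn : 1 ≤ n) (hk : 3 ≤ k) (hk' : 3 ≤ k') (hkk : k ≠ k')
    (hm : 1 ≤ m) {a : Fin n → ℝ} {l : ℝ} {x : Fin n → ℝ}
    (hx : x ∈ Cube n a l) (hxP : x ∈ Pc n k m) :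
    ∑' j : ℕ, Ic n (Cube n a l) k' (j+3)
      ≤ (2⁻¹:ℝ≥0∞)^k' * (2 * 4^n * volume (Cube n a l)) := by
  by_cases h : ∃ j : ℕ, (Pc n k' (j+3) ∩ Cube n a l).Nonempty
  · obtain ⟨j, y, hyP, hy⟩ := h
    have hl := sep_diff hn hk hk' hkk hm (by omega) hx hy hxP hyP
    calc ∑' j : ℕ, Ic n (Cube n a l) k' (j+3)
        ≤ ∑' j : ℕ, Vc n k' (j+3) * volume (Pc n k' (j+3)) :=
          ENNReal.tsum_le_tsum fun j => Ic_le _ _ _ _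
      _ ≤ 2 := block_mass n k'
      _ = 2 * ((2⁻¹:ℝ≥0∞)^k' * 2^k') := by
          rw [← mul_pow, ENNReal.inv_mul_cancel (by norm_num) (by norm_num), one_pow, mul_one]
      _ ≤ 2 * ((2⁻¹:ℝ≥0∞)^k' * (4^n * volume (Cube n a l))) := by
          gcongr
          rw [volume_Cube, ← mul_pow]
          have h1 : (2:ℝ≥0∞)^k' ≤ 4 * ENNReal.ofReal l := by
            have := ENNReal.ofReal_le_ofReal hl
            rwa [ENNReal.ofReal_pow (by norm_num), ENNReal.ofReal_mul (by norm_num),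
              ENNReal.ofReal_ofNat, ENNReal.ofReal_ofNat] at this
          have h2 : (1:ℝ≥0∞) ≤ 2^k' := one_le_pow_of_one_le' (by norm_num) _
          exact h1.trans (le_self_pow (h2.trans h1) (by omega))
      _ = _ := by ring
  · push Not at h
    have : ∑' j : ℕ, Ic n (Cube n a l) k' (j+3) = 0 := by
      rw [ENNReal.tsum_eq_zero]
      exact fun j => Ic_zero _ _ _ _ (by rw [h j]; simp)
    rw [this]
    exact zero_le

/-- The block of `x`. -/
lemma same_block {n k i : ℕ} (hn : 1 ≤ n) (hk : 3 ≤ k)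
    {a : Fin n → ℝ} {l : ℝ} {x : Fin n → ℝ}
    (hx : x ∈ Cube n a l) (hxP : x ∈ Pc n k (i+3)) :
    ∑' j : ℕ, Ic n (Cube n a l) k (j+3)
      ≤ 2 * 4^n * (Vc n k (i+3) * volume (Cube n a l)) := by
  classical
  by_cases h : ∃ j : ℕ, j ≠ i ∧ (Pc n k (j+3) ∩ Cube n a l).Nonempty
  · have hex : ∃ j : ℕ, (Pc n k (j+3) ∩ Cube n a l).Nonempty := ⟨i, x, hxP, hx⟩
    obtain ⟨j0, hj0, hmin⟩ : ∃ j0 : ℕ, (Pc n k (j0+3) ∩ Cube n a l).Nonempty ∧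
        ∀ j < j0, ¬ (Pc n k (j+3) ∩ Cube n a l).Nonempty :=
      ⟨Nat.find hex, Nat.find_spec hex, fun j hj => Nat.find_min hex hj⟩
    have hi : j0 ≤ i := by
      by_contra hc
      exact hmin i (by omega) ⟨x, hxP, hx⟩
    obtain ⟨j1, hj1, hlt⟩ : ∃ j1 : ℕ, (Pc n k (j1+3) ∩ Cube n a l).Nonempty ∧ j0 < j1 := by
      obtain ⟨j, hji, hj⟩ := h
      by_cases hc : j0 = i
      · refine ⟨j, hj, ?_⟩
        by_contra hc'
        exact hmin j (by omega) hj
      · exact ⟨i, ⟨x, hxP, hx⟩, by omega⟩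
    obtain ⟨y0, hy0P, hy0⟩ := hj0
    obtain ⟨y1, hy1P, hy1⟩ := hj1
    have hl := sep_same hn hk (show j0+3 < j1+3 by omega) hy0 hy1 hy0P hy1P
    have hl' : (2:ℝ≥0∞)^(k*n) * (((2:ℝ≥0∞)^(k*n))⁻¹)^(j0+3) ≤ 4^n * volume (Cube n a l) := by
      have := ENNReal.ofReal_le_ofReal hl
      rw [ENNReal.ofReal_mul (by positivity), ENNReal.ofReal_pow (by norm_num),
        ENNReal.ofReal_mul (by norm_num), ENNReal.ofReal_ofNat, ENNReal.ofReal_ofNat] at this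
      have h2 := pow_le_pow_left' this n
      rw [mul_pow, mul_pow, ← volume_Cube n a l, ← pow_mul] at h2
      rwa [← volume_Pc, Pc, volume_Cube]
    set D := (2:ℝ≥0∞)^((k-1)*n) + 1 with hD
    set B := (2:ℝ≥0∞)^(k*n) with hB
    have hB0 : B ≠ 0 := by positivity
    have hBt : B ≠ ∞ := by finiteness
    have hB1 : 1 ≤ B := one_le_pow_of_one_le' (by norm_num) _
    have step : (D⁻¹)^(j0+3) ≤ (B/D)^(i+3) * (4^n * volume (Cube n a l)) := by
      calc (D⁻¹)^(j0+3) = 1 * (D⁻¹)^(j0+3) := (one_mul _).symm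
        _ ≤ B * (D⁻¹)^(j0+3) := by gcongr
        _ = (B/D)^(j0+3) * (B * (B⁻¹)^(j0+3)) := by
            rw [mul_left_comm, ← mul_pow, div_eq_mul_inv, mul_right_comm,
              ENNReal.mul_inv_cancel hB0 hBt, one_mul]
        _ ≤ (B/D)^(i+3) * (4^n * volume (Cube n a l)) := by
            gcongr
            exact one_le_ratio n k hn hk
    calc ∑' j : ℕ, Ic n (Cube n a l) k (j+3)
        = ∑ j ∈ Finset.range j0, Ic n (Cube n a l) k (j+3)
          + ∑' j : ℕ, Ic n (Cube n a l) k (j+j0+3) :=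
          (Summable.sum_add_tsum_nat_add' (f := fun j => Ic n (Cube n a l) k (j+3))
            ENNReal.summable).symm
      _ = ∑' j : ℕ, Ic n (Cube n a l) k (j+j0+3) := by
          rw [Finset.sum_eq_zero, zero_add]
          intro j hj
          exact Ic_zero _ _ _ _ (hmin j (Finset.mem_range.1 hj))
      _ ≤ ∑' j : ℕ, Ak n k * (D⁻¹)^(j+(j0+3)) := by
          refine ENNReal.tsum_le_tsum fun j => (Ic_le _ _ _ _).trans ?_
          rw [mass_Pc, add_assoc]
      _ ≤ 2 * (Ak n k * (D⁻¹)^(j0+3)) := tail_mass n k (j0+3)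
      _ ≤ 2 * (Ak n k * ((B/D)^(i+3) * (4^n * volume (Cube n a l)))) := by gcongr
      _ = _ := by unfold Vc; ring
  · push Not at h
    rw [tsum_eq_single i fun j hj => Ic_zero _ _ _ _ (by rw [h j hj]; simp)]
    refine (Ic_le' _ _ _ _).trans ?_
    refine le_mul_of_one_le_left zero_le ?_
    exact one_le_mul (by norm_num) (one_le_pow_of_one_le' (by norm_num) _)

lemma Pc_disj {n k k' m m' : ℕ} (hn : 1 ≤ n) (hk : 3 ≤ k) (hk' : 3 ≤ k')
    (hm : 1 ≤ m) (hm' : 1 ≤ m') {x : Fin n → ℝ}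
    (hxP : x ∈ Pc n k m) (hyP : x ∈ Pc n k' m') : k = k' := by
  by_contra hkk
  have h := sep_diff (a := x) (l := 1) hn hk hk' hkk hm hm' (x := x) (y := x)
    (by simp [Cube]) (by simp [Cube]) hxP hyP
  have : (2:ℝ)^3 ≤ 2^k' := pow_le_pow_right₀ (by norm_num) hk'
  norm_num at this
  linarith

lemma bigW_of_mem {n k m : ℕ} (hn : 1 ≤ n) {x : Fin n → ℝ} (hx : x ∈ Pc n (k+3) (m+3)) :
    bigW n x = Vc n (k+3) (m+3) := by
  rw [bigW_eq hn, tsum_eq_single k, tsum_eq_single m, Set.indicator_of_mem hx]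
  · intro j hj
    refine Set.indicator_of_notMem (fun h => hj ?_) _
    have := Q1_inj hn (by omega) (by omega) (by omega) (mem_Pc.1 hx) (mem_Pc.1 h)
    omega
  · intro k' hk'
    rw [ENNReal.tsum_eq_zero]
    intro j
    refine Set.indicator_of_notMem (fun h => hk' ?_) _
    have := Pc_disj hn (by omega) (by omega) (by omega) (by omega) hx h
    omega

lemma exists_of_bigW_ne {n : ℕ} (hn : 1 ≤ n) {x : Fin n → ℝ} (hx : bigW n x ≠ 0) :
    ∃ k m : ℕ, x ∈ Pc n (k+3) (m+3) := by
  by_contra hc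
  push Not at hc
  apply hx
  rw [bigW_eq hn, ENNReal.tsum_eq_zero]
  intro k
  rw [ENNReal.tsum_eq_zero]
  intro m
  exact Set.indicator_of_notMem (hc k m) _

lemma upper_avg {n k m : ℕ} (hn : 1 ≤ n) {a : Fin n → ℝ} {l : ℝ} {x : Fin n → ℝ}
    (hx : x ∈ Cube n a l) (hxP : x ∈ Pc n (k+3) (m+3)) :
    ∫⁻ y in Cube n a l, bigW n y
      ≤ (6 * 4^n * Vc n (k+3) (m+3)) * volume (Cube n a l) := by
  set L := volume (Cube n a l)
  have hV := one_le_Vc n (k+3) (m+3) hn (by omega)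
  rw [lintegral_bigW hn]
  calc ∑' k' : ℕ, ∑' j : ℕ, Ic n (Cube n a l) (k'+3) (j+3)
      ≤ ∑' k' : ℕ, ((if k' = k then 2 * 4^n * (Vc n (k+3) (m+3) * L) else 0)
          + (2⁻¹:ℝ≥0∞)^k' * (2 * 4^n * L)) := by
        refine ENNReal.tsum_le_tsum fun k' => ?_
        split_ifs with h
        · subst h
          exact (same_block hn (by omega) hx hxP).trans le_self_add
        · rw [zero_add]
          refine (other_block hn (by omega) (by omega) (by omega) (by omega) hx hxP).trans ?_
          gcongr ?_ * _
          exact pow_le_pow_right_of_le_one' (by norm_num) (by omega)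
    _ = 2 * 4^n * (Vc n (k+3) (m+3) * L) + 2 * (2 * 4^n * L) := by
        rw [ENNReal.tsum_add, tsum_ite_eq, ENNReal.tsum_mul_right, ENNReal.tsum_geometric,
          ENNReal.one_sub_inv_two, inv_inv]
    _ ≤ 2 * 4^n * (Vc n (k+3) (m+3) * L) + 2 * (2 * 4^n * (Vc n (k+3) (m+3) * L)) := by
        gcongr
        exact le_mul_of_one_le_left zero_le hV
    _ = _ := by ring

/-- For `n ≥ 1` there are constants `0 < c ≤ C < ∞` (depending only on `n`)
such that `c · w(x) ≤ M(w)(x) ≤ C · w(x)` for almost every `x ∈ supp(w)`. -/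
theorem maximal_bigW_comparable (n : ℕ) (hn : 1 ≤ n) :
    ∃ c C : ℝ≥0∞, 0 < c ∧ c ≤ C ∧ C < ∞ ∧
      ∀ᵐ x : Fin n → ℝ, bigW n x ≠ 0 →
        c * bigW n x ≤ MaxFn (bigW n) x ∧ MaxFn (bigW n) x ≤ C * bigW n x := by
  refine ⟨1, 6 * 4^n, one_pos, ?_, by finiteness, Filter.Eventually.of_forall fun x hx => ?_⟩
  · exact one_le_mul (by norm_num) (one_le_pow_of_one_le' (by norm_num) _)
  obtain ⟨k, m, hP⟩ := exists_of_bigW_ne hn hx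
  rw [bigW_of_mem hn hP]
  constructor
  · rw [one_mul]
    have hv0 : volume (Pc n (k+3) (m+3)) ≠ 0 := by
      rw [volume_Pc]
      exact pow_ne_zero _ (ENNReal.inv_ne_zero.2 (by finiteness))
    have hvt : volume (Pc n (k+3) (m+3)) ≠ ∞ := by
      rw [Pc, volume_Cube]; finiteness
    refine le_trans ?_ (le_iSup_of_le _ (le_iSup_of_le _ (le_iSup_of_le ?_
      (le_iSup_of_le hP le_rfl))))
    · change _ ≤ (volume (Pc n (k+3) (m+3)))⁻¹ * ∫⁻ y in Pc n (k+3) (m+3), bigW n y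
      have hPm : MeasurableSet (Pc n (k+3) (m+3)) := measurableSet_Cube _ _ _
      rw [setLIntegral_congr_fun hPm
        (fun y hy => bigW_of_mem hn hy), setLIntegral_const, mul_left_comm,
        ENNReal.inv_mul_cancel hv0 hvt, mul_one]
    · positivity
  · refine iSup_le fun a => iSup_le fun l => iSup_le fun hl => iSup_le fun hxQ => ?_
    rw [mul_comm, ← div_eq_mul_inv]
    exact ENNReal.div_le_of_le_mul (upper_avg hn hxQ hP)
end
end

section
/- Fix integers n ≥ 1 and k ≥ 3. Then ∫_{Γ(k)} w_k dx = 2^{−(k−1)n} (2^{(k−1)n}+1)^{−2}; equivalently, A_k · ∫_{Γ(k)} w_k dx = 1. -/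
open MeasureTheory Set ENNReal

noncomputable section

lemma mem_Omega_of_mem_Q1 {n k m : ℕ} (hk : 1 ≤ k) {x : Fin n → ℝ}
    (hx : x ∈ Q1 n k (m+1)) : x ∈ Omega n k (m+1) := by
  have key : ∀ i, x i * 2^(k*(m+1)) ∈ Set.Ico ((2:ℝ)^(k-1)) (2^(k-1) + 1) := by
    intro i
    have h := hx i (Set.mem_univ i)
    simp only [Set.mem_Ico] at h ⊢
    have hP : (0:ℝ) < 2^(k*(m+1)) := by positivity
    have e1 : (2:ℝ)^(-((k:ℤ)*(((m+1:ℕ):ℤ)-1)) - 1) * 2^(k*(m+1)) = 2^(k-1) := by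
      rw [← zpow_natCast, ← zpow_natCast, ← zpow_add₀ (by norm_num)]
      congr 1
      push_cast [Nat.cast_sub hk]
      ring
    have e2 : (2:ℝ)^(-((k:ℤ)*((m+1:ℕ):ℤ))) * 2^(k*(m+1)) = 1 := by
      rw [← zpow_natCast, ← zpow_add₀ (by norm_num)]
      push_cast
      simp
    constructor
    · rw [← e1]; exact mul_le_mul_of_nonneg_right h.1 hP.le
    · rw [← e1, ← e2, ← add_mul]
      exact mul_lt_mul_of_pos_right h.2 hP
  have hk2 : (2:ℝ)^k = 2 * 2^(k-1) := by
    rw [← pow_succ']; congr 1; omega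
  have hk2' : (2:ℤ)^k = 2 * 2^(k-1) := by
    rw [← pow_succ']; congr 1; omega
  have h1 : (1:ℝ) ≤ 2^(k-1) := one_le_pow₀ (by norm_num)
  have h1' : (1:ℤ) ≤ 2^(k-1) := one_le_pow₀ (by norm_num)
  have hnn : ∀ i, 0 ≤ x i := by
    intro i
    by_contra hc
    push Not at hc
    have := (key i).1
    have hP : (0:ℝ) < 2^(k*(m+1)) := by positivity
    nlinarith [mul_neg_of_neg_of_pos hc hP]
  have hlt : ∀ i j, j ≤ m → x i * 2^(k*j) < 1 := by
    intro i j hj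
    have h := (key i).2
    have e : (2:ℝ)^(k*(m+1)) = 2^(k*m) * 2^k := by rw [← pow_add]; congr 1
    have h2 : x i * 2^(k*m) * 2^k < 1 * 2^k := by
      rw [mul_assoc, ← e]; linarith
    have h3 : x i * 2^(k*m) < 1 := lt_of_mul_lt_mul_right h2 (by positivity)
    refine lt_of_le_of_lt (mul_le_mul_of_nonneg_left ?_ (hnn i)) h3
    exact pow_le_pow_right₀ (by norm_num) (Nat.mul_le_mul_left k hj)
  refine ⟨fun i => ⟨hnn i, ?_⟩, fun i => ⟨fun j _ hj => ?_, ?_⟩⟩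
  · simpa using hlt i 0 (Nat.zero_le m)
  · have : ⌊x i * 2^(k*j)⌋ = 0 := by
      rw [Int.floor_eq_zero_iff]
      exact ⟨mul_nonneg (hnn i) (by positivity), hlt i j (by omega)⟩
    rw [digit, this, Int.zero_emod]
    positivity
  · have : ⌊x i * 2^(k*(m+1))⌋ = 2^(k-1) := by
      rw [Int.floor_eq_iff]
      push_cast
      exact key i
    rw [digit, this]
    exact Int.emod_eq_of_lt (by positivity) (by omega)

lemma Omega_unique_s8 {n k a b : ℕ} (hn : 1 ≤ n) (ha : 1 ≤ a) (hb : 1 ≤ b) {x : Fin n → ℝ}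
    (hxa : x ∈ Omega n k a) (hxb : x ∈ Omega n k b) : a = b := by
  rcases lt_trichotomy a b with h | h | h
  · have h1 := (hxb.2 ⟨0, hn⟩).1 a ha h
    have h2 := (hxa.2 ⟨0, hn⟩).2
    omega
  · exact h
  · have h1 := (hxa.2 ⟨0, hn⟩).1 b hb h
    have h2 := (hxb.2 ⟨0, hn⟩).2
    omega

lemma wk_of_mem_Omega {n k m : ℕ} (hn : 1 ≤ n) {x : Fin n → ℝ}
    (hx : x ∈ Omega n k (m+1)) :
    wk n k x = ((2:ℝ≥0∞)^(k*n) / ((2:ℝ≥0∞)^((k-1)*n) + 1))^(m+1) := by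
  unfold wk
  rw [tsum_eq_single m]
  · exact Set.indicator_of_mem hx _
  · intro b hb
    refine Set.indicator_of_notMem (fun h => hb ?_) _
    have := Omega_unique_s8 hn (by omega) (by omega) hx h
    omega

lemma measurableSet_Q1 (n k m : ℕ) : MeasurableSet (Q1 n k m) :=
  MeasurableSet.univ_pi fun _ => measurableSet_Ico

lemma volume_Q1 (n k m : ℕ) : volume (Q1 n k m) = (((2:ℝ≥0∞)^(k*n))⁻¹)^m := by
  unfold Q1 Cube
  rw [volume_pi, Measure.pi_pi]
  simp only [Real.volume_Ico, add_sub_cancel_left, Finset.prod_const, Finset.card_univ,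
    Fintype.card_fin]
  have : (2:ℝ)^(-((k:ℤ)*(m:ℤ))) = ((2:ℝ)^(k*m))⁻¹ := by
    rw [zpow_neg]; norm_cast
  rw [this, ENNReal.ofReal_inv_of_pos (by positivity), ENNReal.ofReal_pow (by norm_num)]
  simp only [ENNReal.ofReal_ofNat, ENNReal.inv_pow, ← pow_mul]
  congr 1
  ring

lemma mass_eq (n k : ℕ) (hn : 1 ≤ n) (hk : 3 ≤ k) :
    ∫⁻ x in Gamma n k, wk n k x
        = ((2:ℝ≥0∞)^((k-1)*n))⁻¹ * ((((2:ℝ≥0∞)^((k-1)*n) + 1))^2)⁻¹ := by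
  unfold Gamma
  rw [lintegral_iUnion (fun m => measurableSet_Q1 n k (m+3))]
  swap
  · intro a b hab
    refine Set.disjoint_left.2 fun x hxa hxb => hab ?_
    have := Omega_unique_s8 hn (by omega) (by omega)
      (mem_Omega_of_mem_Q1 (by omega) hxa) (mem_Omega_of_mem_Q1 (by omega) hxb)
    omega
  have hterm : ∀ m : ℕ, ∫⁻ x in Q1 n k (m+3), wk n k x
      = (((2:ℝ≥0∞)^((k-1)*n) + 1)⁻¹)^3 * (((2:ℝ≥0∞)^((k-1)*n) + 1)⁻¹)^m := by
    intro m
    rw [setLIntegral_congr_fun (measurableSet_Q1 n k (m+3))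
      (fun x hx => wk_of_mem_Omega hn (mem_Omega_of_mem_Q1 (by omega) hx)),
      setLIntegral_const, volume_Q1, ← mul_pow, ← pow_add, add_comm 3 m]
    congr 1
    rw [div_eq_mul_inv, mul_right_comm, ENNReal.mul_inv_cancel (by simp) (by finiteness), one_mul]
  simp_rw [hterm]
  rw [ENNReal.tsum_mul_left, ENNReal.tsum_geometric]
  generalize hB : (2:ℝ≥0∞)^((k-1)*n) = B
  have hB0 : B ≠ 0 := by rw [← hB]; simp
  have hBt : B ≠ ∞ := by rw [← hB]; finiteness
  have hC0 : B + 1 ≠ 0 := by simp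
  have hCt : B + 1 ≠ ∞ := by finiteness
  have h1 : 1 - (B+1)⁻¹ = B * (B+1)⁻¹ := by
    refine ENNReal.sub_eq_of_eq_add (by simp) ?_
    rw [← add_one_mul, ENNReal.mul_inv_cancel hC0 hCt]
  rw [h1, ENNReal.mul_inv (Or.inl hB0) (Or.inl hBt), inv_inv, ← ENNReal.inv_pow, pow_succ,
    ENNReal.mul_inv (Or.inr hCt) (Or.inr hC0)]
  calc ((B+1)^2)⁻¹ * (B+1)⁻¹ * (B⁻¹ * (B+1))
      = B⁻¹ * ((B+1)^2)⁻¹ * ((B+1) * (B+1)⁻¹) := by ring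
    _ = _ := by rw [ENNReal.mul_inv_cancel hC0 hCt, mul_one]

/-- For `n ≥ 1` and `k ≥ 3`:
`∫_{Γ(k)} w_k = 2^{-(k-1)n} (2^{(k-1)n}+1)^{-2}`, equivalently `A_k ∫_{Γ(k)} w_k = 1`. -/
theorem wk_mass_Gamma (n k : ℕ) (hn : 1 ≤ n) (hk : 3 ≤ k) :
    (∫⁻ x in Gamma n k, wk n k x
        = ((2:ℝ≥0∞)^((k-1)*n))⁻¹ * ((((2:ℝ≥0∞)^((k-1)*n) + 1))^2)⁻¹) ∧
    Ak n k * ∫⁻ x in Gamma n k, wk n k x = 1 := by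
  refine ⟨mass_eq n k hn hk, ?_⟩
  rw [mass_eq n k hn hk, Ak]
  have hB0 : (2:ℝ≥0∞)^((k-1)*n) ≠ 0 := by simp
  have hBt : (2:ℝ≥0∞)^((k-1)*n) ≠ ∞ := by finiteness
  rw [mul_mul_mul_comm, ENNReal.mul_inv_cancel hB0 hBt,
    ENNReal.mul_inv_cancel (by simp) (by finiteness), one_mul]
end
end
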